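/- arXiv:1912.13043 — 2 statements merged into one kernel-verified Lean document; each statement's English description precedes it below -/
import Mathlib

section
/- Let N be a coisotropic smooth submanifold of E and let p ∈ N. Then there exists a Lagrangian smooth submanifold L of E with p ∈ L ⊆ N. -/
/-!
The symplectic form restricted to a coisotropic submanifold `N` has kernel `T^ω`, of constant
dimension `2n - dim N`. In a local parametrization `ψ` of `N` by a vector space this is a closed
2-form of constant rank, and it suffices to find an immersed isotropic germ through the origin of
dimension `(dim N + (2n - dim N)) / 2 = n` (`exists_isotropic_immersion`).

That germ is found by induction on the dimension of the parameter space. If the form is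
nondegenerate, its restriction to a hyperplane has one-dimensional kernel everywhere, so one passes
to the hyperplane. If it is degenerate, constancy of the rank gives a smooth nonvanishing field `X`
in the kernel (`exists_kernel_field`); an isotropic germ in a hyperplane transverse to `X` is swept
out by the flow of `X`, and the result remains isotropic because the form is closed
(`isotropic_flowout`). No Darboux theorem is needed.

The jointly smooth local flow (`exists_smooth_flow`) comes from the inverse function theorem in the
Banach space `ℝ × V × C([-1, 1], V)`, applied to the residual of the Picard integral equation; this
rests on the smoothness of the superposition operator `γ ↦ X ∘ γ` (`contDiff_postcomp`).

Finally, an isotropic immersion of `ℝⁿ` is completed by a linear complement to a local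
diffeomorphism of `E`, whose inverse is a chart exhibiting the image as a Lagrangian submanifold
(`exists_lagrangian_of_immersion`).
-/

open scoped ENNReal Topology

noncomputable section

/-- The standard symplectic vector space `E = ℝⁿ × ℝⁿ`. -/
abbrev E (n : ℕ) := (Fin n → ℝ) × (Fin n → ℝ)

/-- The standard symplectic form `ω₀((x,y),(x',y')) = ⟨x,y'⟩ − ⟨y,x'⟩`. -/
def omega0 (n : ℕ) (z w : E n) : ℝ :=
  (∑ i, z.1 i * w.2 i) - ∑ i, z.2 i * w.1 i

/-- The Hamiltonian vector field `X_{H_t}(x,y) = (∂_y H(t,x,y), −∂_x H(t,x,y))`. -/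
def XH (n : ℕ) (H : ℝ × E n → ℝ) (t : ℝ) (z : E n) : E n :=
  ((fun i => fderiv ℝ (fun w => H (t, w)) z (0, Pi.single i 1)),
   (fun i => -fderiv ℝ (fun w => H (t, w)) z (Pi.single i 1, 0)))

/-- `Φ` is the Hamiltonian flow of `H`: `Φ 0 = id` and `(d/dt) Φ t z = X_{H_t} (Φ t z)`. -/
def IsHamFlow (n : ℕ) (H : ℝ × E n → ℝ) (Φ : ℝ → E n → E n) : Prop :=
  (∀ z, Φ 0 z = z) ∧ ∀ z t, HasDerivAt (fun s => Φ s z) (XH n H t (Φ t z)) t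

/-- `H : ℝ × E → ℝ` is smooth with support a compact subset of `[0,1] × W`. -/
def AdmissibleH (n : ℕ) (W : Set (E n)) (H : ℝ × E n → ℝ) : Prop :=
  ContDiff ℝ (⊤ : ℕ∞) H ∧ IsCompact (tsupport H) ∧
    tsupport H ⊆ Set.Icc (0 : ℝ) 1 ×ˢ W

/-- `Ham(W)`: time-one maps of Hamiltonian flows of admissible Hamiltonians. -/
def HamGrp (n : ℕ) (W : Set (E n)) : Set (E n → E n) :=
  {φ | ∃ H Φ, AdmissibleH n W H ∧ IsHamFlow n H Φ ∧ φ = Φ 1}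

/-- `‖H‖ = ∫₀¹ (sup H(t,·) − inf H(t,·)) dt`. -/
def HNorm (n : ℕ) (H : ℝ × E n → ℝ) : ℝ :=
  ∫ t in (0:ℝ)..(1:ℝ),
    (sSup (Set.range fun z => H (t, z)) - sInf (Set.range fun z => H (t, z)))

/-- The Hofer norm `‖φ‖_W` of `φ ∈ Ham(W)`. -/
def hoferNorm (n : ℕ) (W : Set (E n)) (φ : E n → E n) : ℝ :=
  sInf {c | ∃ H Φ, AdmissibleH n W H ∧ IsHamFlow n H Φ ∧ φ = Φ 1 ∧ c = HNorm n H}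

/-- The displacement energy `e_W(U,N)`, valued in `ℝ≥0∞` (so `inf ∅ = ⊤`).
`closure U ∩ W` is the closure of `U` in `W`. -/
def dispE (n : ℕ) (W U N : Set (E n)) : ℝ≥0∞ :=
  sInf {c | ∃ φ ∈ HamGrp n W, φ '' (closure U ∩ W) ∩ N = ∅ ∧
    c = ENNReal.ofReal (hoferNorm n W φ)}

/-- `p` is rigid with respect to `N` in `W`. -/
def RigidWrt (n : ℕ) (W N : Set (E n)) (p : E n) : Prop :=
  ∀ U : Set (E n), IsOpen U → p ∈ U → U ⊆ W → 0 < dispE n W U N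

/-- `N` is a subset of `W` which is closed as a subset of `W`. -/
def ClosedIn (n : ℕ) (W N : Set (E n)) : Prop :=
  N ⊆ W ∧ closure N ∩ W ⊆ N

/-- `N` is locally closed. -/
def LocallyClosedSet (n : ℕ) (N : Set (E n)) : Prop :=
  ∀ q ∈ N, ∃ V : Set (E n), IsOpen V ∧ q ∈ V ∧ ClosedIn n V (N ∩ V)

/-- `p` is locally rigid with respect to `N`. -/
def LocRigid (n : ℕ) (N : Set (E n)) (p : E n) : Prop :=
  ∃ W : Set (E n), IsOpen W ∧ p ∈ W ∧ ClosedIn n W (N ∩ W) ∧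
    RigidWrt n W (N ∩ W) p

/-- `ψ` is a symplectomorphism from the open set `W` onto its (open) image. -/
def IsSymplecto (n : ℕ) (W : Set (E n)) (ψ : E n → E n) : Prop :=
  IsOpen W ∧ IsOpen (ψ '' W) ∧ Set.InjOn ψ W ∧ ContDiffOn ℝ (⊤ : ℕ∞) ψ W ∧
  (∃ g : E n → E n, ContDiffOn ℝ (⊤ : ℕ∞) g (ψ '' W) ∧ ∀ z ∈ W, g (ψ z) = z) ∧
  ∀ z ∈ W, ∀ u v, omega0 n (fderiv ℝ ψ z u) (fderiv ℝ ψ z v) = omega0 n u v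

/-- `ψ` is a symplectic homeomorphism of `E`: a homeomorphism which is a `C⁰`-limit
(uniformly on compact sets, together with inverses) of symplectomorphisms of `E` onto `E`. -/
def IsSympHomeo (n : ℕ) (ψ : E n ≃ₜ E n) : Prop :=
  ∃ Ψ : ℕ → E n ≃ E n,
    (∀ m, IsSymplecto n Set.univ (Ψ m)) ∧
    TendstoLocallyUniformly (fun m z => Ψ m z) (fun z => ψ z) Filter.atTop ∧
    TendstoLocallyUniformly (fun m z => (Ψ m).symm z) (fun z => ψ.symm z) Filter.atTop

/-- A fixed `k`-dimensional coordinate subspace `ℝᵏ × {0}` of `E`. -/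
def coordSubspace (n k : ℕ) : Set (E n) :=
  {z | (∀ i : Fin n, k ≤ (i : ℕ) → z.1 i = 0) ∧
       (∀ i : Fin n, k ≤ n + (i : ℕ) → z.2 i = 0)}

/-- `N` is a smooth `k`-dimensional submanifold of `E`. -/
def IsSubmanifold (n k : ℕ) (N : Set (E n)) : Prop :=
  ∀ p ∈ N, ∃ (V : Set (E n)) (Φ : E n → E n),
    IsOpen V ∧ p ∈ V ∧ IsOpen (Φ '' V) ∧ Set.InjOn Φ V ∧
    ContDiffOn ℝ (⊤ : ℕ∞) Φ V ∧
    (∃ g : E n → E n, ContDiffOn ℝ (⊤ : ℕ∞) g (Φ '' V) ∧ ∀ z ∈ V, g (Φ z) = z) ∧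
    Φ '' (N ∩ V) = coordSubspace n k ∩ Φ '' V

/-- The tangent space `T_pN`, as velocities of curves through `p` lying locally in `N`. -/
def TangentSet (n : ℕ) (N : Set (E n)) (p : E n) : Set (E n) :=
  {v | ∃ γ : ℝ → E n, γ 0 = p ∧ (∀ᶠ t in 𝓝 (0:ℝ), γ t ∈ N) ∧ HasDerivAt γ v 0}

/-- The symplectic orthogonal complement `T^{ω₀}`. -/
def symplOrth (n : ℕ) (T : Set (E n)) : Set (E n) :=
  {v | ∀ u ∈ T, omega0 n v u = 0}

/-- `N` is coisotropic: `(T_pN)^{ω₀} ⊆ T_pN` for all `p ∈ N`. -/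
def IsCoisotropic (n : ℕ) (N : Set (E n)) : Prop :=
  ∀ p ∈ N, symplOrth n (TangentSet n N p) ⊆ TangentSet n N p

/-- `N` is Lagrangian: `(T_pN)^{ω₀} = T_pN` for all `p ∈ N`. -/
def IsLagrangian (n : ℕ) (N : Set (E n)) : Prop :=
  ∀ p ∈ N, symplOrth n (TangentSet n N p) = TangentSet n N p

/-- `Σ_N`: Hamiltonian diffeomorphisms preserving `N`. -/
def SigmaGrp (n : ℕ) (N : Set (E n)) : Set (E n → E n) :=
  {φ | φ ∈ HamGrp n Set.univ ∧ φ '' N = N}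

/-- `Σ̄_N`: the closure of `Σ_N` in the Hofer metric. -/
def SigmaBar (n : ℕ) (N : Set (E n)) : Set (E n → E n) :=
  {φ | φ ∈ HamGrp n Set.univ ∧ ∀ ε : ℝ, 0 < ε →
    ∃ ψ ∈ SigmaGrp n N, ∃ χ : E n → E n,
      Function.LeftInverse χ ψ ∧ Function.RightInverse χ ψ ∧
      hoferNorm n Set.univ (χ ∘ φ) < ε}

/-- The rigid locus `R_N = ⋂_{φ ∈ Σ̄_N} φ⁻¹(N)`. -/
def rigidLocus (n : ℕ) (N : Set (E n)) : Set (E n) :=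
  ⋂ φ ∈ SigmaBar n N, φ ⁻¹' N

open scoped ContDiff

/-! ### Inverse function theorem and superposition operators -/

/-- Smooth inverse function theorem in a Banach space. The source can be shrunk into any prescribed
neighbourhood `S` of `a`, and the inverse is smooth on the whole target. -/
theorem smooth_inverse {X Y : Type*} [NormedAddCommGroup X] [NormedSpace ℝ X] [CompleteSpace X]
    [NormedAddCommGroup Y] [NormedSpace ℝ Y] {f : X → Y} {a : X} {f' : X ≃L[ℝ] Y}
    (hf : ∀ᶠ x in 𝓝 a, ContDiffAt ℝ ∞ f x) (hf' : HasFDerivAt f (f' : X →L[ℝ] Y) a)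
    {S : Set X} (hS : S ∈ 𝓝 a) :
    ∃ e : OpenPartialHomeomorph X Y, (e : X → Y) = f ∧ a ∈ e.source ∧ e.source ⊆ S ∧
      (∀ x ∈ e.source, ContDiffAt ℝ ∞ f x) ∧ (∀ y ∈ e.target, ContDiffAt ℝ ∞ e.symm y) := by
  have hfa : ContDiffAt ℝ ∞ f a := hf.self_of_nhds
  have hinv : ∀ᶠ x in 𝓝 a, fderiv ℝ f x ∈ Set.range
      (ContinuousLinearEquiv.toContinuousLinearMap : (X ≃L[ℝ] Y) → (X →L[ℝ] Y)) := by
    have hc : ContinuousAt (fderiv ℝ f) a :=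
      (hfa.fderiv_right (m := 0) (by simp)).continuousAt
    apply hc
    rw [hf'.fderiv]
    exact f'.nhds
  obtain ⟨U, hU, hUo, haU⟩ := eventually_nhds_iff.1
    (hf.and (hinv.and (Filter.eventually_of_mem hS fun x hx => hx)))
  let e := hfa.toOpenPartialHomeomorph f hf' (by simp)
  have he : (e : X → Y) = f := rfl
  refine ⟨e.restrOpen U hUo, he, ⟨hfa.mem_toOpenPartialHomeomorph_source hf' (by simp), haU⟩,
    fun x hx => (hU x hx.2).2.2, fun x hx => (hU x hx.2).1, fun y hy => ?_⟩
  have hx : (e.restrOpen U hUo).symm y ∈ (e.restrOpen U hUo).source :=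
    (e.restrOpen U hUo).map_target hy
  obtain ⟨h1, ⟨A, hA⟩, h3⟩ := hU _ hx.2
  refine (e.restrOpen U hUo).contDiffAt_symm (f₀' := A) hy ?_ h1
  rw [hA]
  exact (h1.differentiableAt (by simp)).hasFDerivAt

section Nemytskii
variable {K : Type} [TopologicalSpace K] [CompactSpace K]

/-- Pointwise application `(A, h) ↦ (t ↦ A t (h t))` of a curve of linear maps to a curve of
vectors, as a continuous bilinear map. -/
def applyCurve (F G : Type) [NormedAddCommGroup F] [NormedSpace ℝ F]
    [NormedAddCommGroup G] [NormedSpace ℝ G] : C(K, F →L[ℝ] G) →L[ℝ] C(K, F) →L[ℝ] C(K, G) :=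
  LinearMap.mkContinuous₂
    (LinearMap.mk₂ ℝ (fun (A : C(K, F →L[ℝ] G)) (h : C(K, F)) =>
        (⟨fun t => A t (h t), by fun_prop⟩ : C(K, G)))
      (fun A B h => by ext t; simp) (fun c A h => by ext t; simp)
      (fun A h k => by ext t; simp) (fun c A h => by ext t; simp)) 1
    (fun A h => by
      rw [ContinuousMap.norm_le _ (by positivity)]
      intro t
      simp only [LinearMap.mk₂_apply, ContinuousMap.coe_mk, one_mul]
      exact (A t).le_of_opNorm_le_of_le (A.norm_coe_le_norm t) (h.norm_coe_le_norm t))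

@[simp] theorem applyCurve_apply {F G : Type} [NormedAddCommGroup F] [NormedSpace ℝ F]
    [NormedAddCommGroup G] [NormedSpace ℝ G] (A : C(K, F →L[ℝ] G)) (h : C(K, F)) (t : K) :
    applyCurve F G A h t = A t (h t) := rfl

/-- The superposition operator `γ ↦ f ∘ γ` on `C(K, F)` is differentiable: the remainder estimate of
`f` is uniform along the compact image of `γ`, by the mean value inequality. -/
theorem hasFDerivAt_postcomp {F G : Type} [NormedAddCommGroup F] [NormedSpace ℝ F]
    [NormedAddCommGroup G] [NormedSpace ℝ G] (f : C(F, G)) (f' : C(F, F →L[ℝ] G))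
    (hf : ∀ x, HasFDerivAt f (f' x) x) (γ : C(K, F)) :
    HasFDerivAt (fun γ : C(K, F) => f.comp γ) (applyCurve F G (f'.comp γ)) γ := by
  rw [hasFDerivAt_iff_isLittleO, Asymptotics.isLittleO_iff]
  intro c hc
  have hcont : ContinuousAt (fun η : C(K, F) => f'.comp η) γ :=
    (ContinuousMap.continuous_postcomp f').continuousAt
  obtain ⟨δ, hδ, hδc⟩ :=
    (Metric.continuousAt_iff (α := C(K, F)) (β := C(K, F →L[ℝ] G))).1 hcont c hc
  filter_upwards [Metric.ball_mem_nhds γ hδ] with η hη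
  rw [ContinuousMap.norm_le _ (by positivity)]
  intro t
  have hηt : η t ∈ Metric.ball (γ t) δ :=
    lt_of_le_of_lt (ContinuousMap.dist_apply_le_dist t) hη
  have key := (convex_ball (γ t) δ).norm_image_sub_le_of_norm_hasFDerivWithin_le' (𝕜 := ℝ)
    (f := f) (f' := f') (φ := f' (γ t)) (C := c) (fun y _ => (hf y).hasFDerivWithinAt)
    (fun y hy => by
      -- translating `γ` so that it passes through `y` at time `t` keeps it `δ`-close to `γ`
      have h1 : dist (γ + ContinuousMap.const K (y - γ t)) γ < δ := by
        rw [dist_eq_norm, add_sub_cancel_left]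
        refine lt_of_le_of_lt ((ContinuousMap.norm_le _ (norm_nonneg (y - γ t))).2
          fun x => le_rfl) ?_
        rwa [← dist_eq_norm]
      have h2 := (ContinuousMap.dist_apply_le_dist t).trans (hδc h1).le
      simpa [dist_eq_norm] using h2)
    (Metric.mem_ball_self hδ) hηt
  refine key.trans ?_
  gcongr
  exact (η - γ).norm_coe_le_norm t

/-- Induction on `m`, for all `F`, `G` and `f` at once: the derivative of `γ ↦ f ∘ γ` is built from
the superposition operator of `Df`. -/
theorem contDiff_postcomp_nat (m : ℕ) : ∀ {F G : Type} [NormedAddCommGroup F] [NormedSpace ℝ F]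
    [NormedAddCommGroup G] [NormedSpace ℝ G] (f : C(F, G)), ContDiff ℝ ∞ f →
    ContDiff ℝ m (fun γ : C(K, F) => f.comp γ) := by
  induction m with
  | zero =>
    intro F G _ _ _ _ f hf
    exact contDiff_zero.2 (ContinuousMap.continuous_postcomp f)
  | succ m ih =>
    intro F G _ _ _ _ f hf
    have hf1 : ContDiff ℝ ∞ (fderiv ℝ f) := hf.fderiv_right (by simp)
    let f' : C(F, F →L[ℝ] G) := ⟨fderiv ℝ f, hf1.continuous⟩
    push_cast
    rw [contDiff_succ_iff_hasFDerivAt]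
    refine ⟨fun γ => applyCurve F G (f'.comp γ), ?_, fun γ => hasFDerivAt_postcomp f f'
      (fun x => (hf.differentiable (by simp) x).hasFDerivAt) γ⟩
    exact (applyCurve F G).contDiff.comp (ih f' hf1)

theorem contDiff_postcomp {F G : Type} [NormedAddCommGroup F] [NormedSpace ℝ F]
    [NormedAddCommGroup G] [NormedSpace ℝ G] (f : C(F, G)) (hf : ContDiff ℝ ∞ f) :
    ContDiff ℝ ∞ (fun γ : C(K, F) => f.comp γ) :=
  contDiff_infty.2 fun m => contDiff_postcomp_nat m f hf
end Nemytskii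

/-! ### Smooth dependence of flows -/

section Flow
variable {V : Type} [NormedAddCommGroup V] [NormedSpace ℝ V]

/-- The time interval `[-1, 1]`. -/
abbrev TimeI : Type := Set.Icc (-1 : ℝ) 1

theorem neg_one_le_one_real : (-1 : ℝ) ≤ 1 := by norm_num

/-- The primitive `t ↦ ∫₀ᵗ γ` of a curve on `[-1, 1]`, as a continuous linear map. Curves are extended
to `ℝ` by constants so that the interval integral makes sense. -/
def primitiveCurve [CompleteSpace V] : C(TimeI, V) →L[ℝ] C(TimeI, V) :=
  LinearMap.mkContinuous
    { toFun := fun γ => ⟨fun t => ∫ u in (0 : ℝ)..t, Set.IccExtend neg_one_le_one_real γ u, by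
          have h : Continuous (Set.IccExtend neg_one_le_one_real γ) := γ.continuous.Icc_extend'
          exact (intervalIntegral.continuous_primitive
            (fun a b => h.intervalIntegrable a b) 0).comp continuous_subtype_val⟩
      map_add' := fun γ η => by
        ext t
        exact intervalIntegral.integral_add (γ.continuous.Icc_extend'.intervalIntegrable _ _)
          (η.continuous.Icc_extend'.intervalIntegrable _ _)
      map_smul' := fun c γ => by
        ext t
        exact intervalIntegral.integral_smul c _ } 1
    (fun γ => by
      rw [one_mul, ContinuousMap.norm_le _ (norm_nonneg _)]
      intro t
      refine (intervalIntegral.norm_integral_le_of_norm_le_const (C := ‖γ‖)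
        (fun u _ => γ.norm_coe_le_norm _)).trans ?_
      have : |(t : ℝ) - 0| ≤ 1 := by rw [sub_zero]; exact abs_le.2 t.2
      exact mul_le_of_le_one_right (norm_nonneg _) this)

theorem primitiveCurve_apply [CompleteSpace V] (γ : C(TimeI, V)) (t : TimeI) :
    primitiveCurve γ t = ∫ u in (0 : ℝ)..t, Set.IccExtend neg_one_le_one_real γ u := rfl

/-- The constant curves, as a continuous linear map. -/
def constCurve : V →L[ℝ] C(TimeI, V) :=
  LinearMap.mkContinuous
    { toFun := fun x => ContinuousMap.const _ x
      map_add' := fun _ _ => rfl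
      map_smul' := fun _ _ => rfl } 1
    (fun x => by
      rw [one_mul, ContinuousMap.norm_le _ (norm_nonneg _)]
      exact fun _ => le_rfl)

@[simp] theorem constCurve_apply (x : V) (t : TimeI) : constCurve x t = x := rfl

/-- The map `(s, x, γ) ↦ (s, x, γ - x - s ∫₀ᵗ X(γ))`. Its third component vanishes exactly when
`γ` solves `γ' = s X(γ)`, `γ 0 = x` on `[-1, 1]`. -/
def picardResidual [CompleteSpace V] (X : C(V, V)) (y : ℝ × V × C(TimeI, V)) :
    ℝ × V × C(TimeI, V) :=
  (y.1, y.2.1, y.2.2 - constCurve y.2.1 - y.1 • primitiveCurve (X.comp y.2.2))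

theorem contDiff_picardResidual [CompleteSpace V] (X : C(V, V)) (hX : ContDiff ℝ ∞ X) :
    ContDiff ℝ ∞ (picardResidual X) := by
  have h1 : ContDiff ℝ ∞ (fun y : ℝ × V × C(TimeI, V) => X.comp y.2.2) :=
    (contDiff_postcomp X hX).comp (contDiff_snd.comp contDiff_snd)
  have h2 : ContDiff ℝ ∞ (fun y : ℝ × V × C(TimeI, V) => primitiveCurve (X.comp y.2.2)) :=
    (primitiveCurve (V := V)).contDiff.comp h1
  have h3 : ContDiff ℝ ∞ (fun y : ℝ × V × C(TimeI, V) => constCurve y.2.1) :=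
    (constCurve (V := V)).contDiff.comp (contDiff_fst.comp contDiff_snd)
  unfold picardResidual
  fun_prop

/-- At the origin the residual has derivative `(s, x, γ) ↦ (s, x, γ - x - s ∫₀ᵗ X(0))`, which is
invertible. -/
theorem hasFDerivAt_picardResidual [CompleteSpace V] (X : C(V, V)) (hX : ContDiff ℝ ∞ X) :
    ∃ A : (ℝ × V × C(TimeI, V)) ≃L[ℝ] (ℝ × V × C(TimeI, V)),
      HasFDerivAt (picardResidual X) (A : (ℝ × V × C(TimeI, V)) →L[ℝ] _) 0 := by
  let c : C(TimeI, V) := primitiveCurve (X.comp 0)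
  let π₁ : (ℝ × V × C(TimeI, V)) →L[ℝ] ℝ := ContinuousLinearMap.fst ℝ _ _
  let π₂ : (ℝ × V × C(TimeI, V)) →L[ℝ] V :=
    (ContinuousLinearMap.fst ℝ _ _).comp (ContinuousLinearMap.snd ℝ _ _)
  let π₃ : (ℝ × V × C(TimeI, V)) →L[ℝ] C(TimeI, V) :=
    (ContinuousLinearMap.snd ℝ _ _).comp (ContinuousLinearMap.snd ℝ _ _)
  let A := ContinuousLinearEquiv.equivOfInverse
    (π₁.prod (π₂.prod (π₃ - constCurve.comp π₂ - π₁.smulRight c)))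
    (π₁.prod (π₂.prod (π₃ + constCurve.comp π₂ + π₁.smulRight c)))
    (fun y => by ext <;> simp [π₁, π₂, π₃] <;> abel)
    (fun y => by ext <;> simp [π₁, π₂, π₃] <;> abel)
  refine ⟨A, ?_⟩
  have h1 : DifferentiableAt ℝ
      (fun y : ℝ × V × C(TimeI, V) => primitiveCurve (X.comp y.2.2)) 0 :=
    (((primitiveCurve (V := V)).contDiff.comp ((contDiff_postcomp X hX).comp
      (contDiff_snd.comp contDiff_snd))).differentiable (n := ∞) (by simp)) 0
  have h2 := (π₁.hasFDerivAt (x := 0)).smul h1.hasFDerivAt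
  have h3 := (π₁.hasFDerivAt (x := 0)).prodMk ((π₂.hasFDerivAt (x := 0)).prodMk
    (((π₃.hasFDerivAt (x := 0)).sub ((constCurve.comp π₂).hasFDerivAt (x := 0))).sub h2))
  refine h3.congr_fderiv ?_
  ext y <;> simp [A, c, π₁, π₂, π₃]

/-- The reparametrization `t ↦ τ t` of `[-1, 1]`, for `|τ| ≤ 1`. -/
def scaleTime (τ : TimeI) : C(TimeI, TimeI) :=
  ⟨fun t => ⟨τ * t, abs_le.1 (by
    rw [abs_mul]; exact mul_le_one₀ (abs_le.2 τ.2) (abs_nonneg _) (abs_le.2 t.2))⟩, by fun_prop⟩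

/-- If `γ` solves the equation with speed `s`, then `t ↦ γ (τ t)` solves it with speed `τ s`. -/
theorem picardResidual_scaleTime [CompleteSpace V] (X : C(V, V)) (s : ℝ) (x : V)
    (γ : C(TimeI, V)) (h : picardResidual X (s, x, γ) = (s, x, 0)) (τ : TimeI) :
    picardResidual X (τ * s, x, γ.comp (scaleTime τ)) = (τ * s, x, 0) := by
  simp only [picardResidual, Prod.mk.injEq, true_and] at h ⊢
  ext t
  have ht := congrArg (fun η : C(TimeI, V) => η (scaleTime τ t)) h
  simp only [ContinuousMap.sub_apply, ContinuousMap.smul_apply, constCurve_apply,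
    primitiveCurve_apply, ContinuousMap.zero_apply, ContinuousMap.comp_apply] at ht ⊢
  rw [← ht]
  congr 1
  rw [mul_comm, mul_smul]
  congr 1
  have h0 := intervalIntegral.smul_integral_comp_mul_left (a := 0) (b := (t : ℝ))
    (Set.IccExtend neg_one_le_one_real (X.comp γ)) (τ : ℝ)
  rw [mul_zero] at h0
  refine Eq.trans ?_ h0
  congr 1
  refine intervalIntegral.integral_congr fun u hu => ?_
  have hu' : u ∈ Set.Icc (-1 : ℝ) 1 := by
    have h1 := t.2
    rcases Set.mem_uIcc.1 hu with h | h
    · exact ⟨by linarith [h.1], h.2.trans h1.2⟩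
    · exact ⟨h1.1.trans h.1, by linarith [h.2]⟩
  have hu2 := (scaleTime τ ⟨u, hu'⟩).2
  change (τ : ℝ) * u ∈ Set.Icc (-1 : ℝ) 1 at hu2
  rw [Set.IccExtend_of_mem _ _ hu', Set.IccExtend_of_mem _ _ hu2]
  rfl

/-- A smooth vector field has a local flow near the origin which is jointly smooth in time and
initial value. The flow is `φ (s, x) = S (s, x) 1`, where `S (s, x)` is the solution of
`γ' = s X(γ)`, `γ 0 = x` given by the local inverse of the Picard residual. -/
theorem exists_smooth_flow [CompleteSpace V] (X : V → V) (hX : ContDiff ℝ ∞ X) :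
    ∃ φ : ℝ × V → V, (∀ᶠ y in 𝓝 (0 : ℝ × V), ContDiffAt ℝ ∞ φ y) ∧
      (∀ᶠ x in 𝓝 (0 : V), φ (0, x) = x) ∧
      ∀ᶠ y in 𝓝 (0 : ℝ × V), HasDerivAt (fun s => φ (s, y.2)) (X (φ y)) y.1 := by
  let XC : C(V, V) := ⟨X, hX.continuous⟩
  obtain ⟨A, hA⟩ := hasFDerivAt_picardResidual XC hX
  obtain ⟨e, he, h0e, -, -, hsm⟩ := smooth_inverse
    (Filter.Eventually.of_forall fun y => (contDiff_picardResidual XC hX).contDiffAt) hA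
    Filter.univ_mem
  have hzero : picardResidual XC 0 = 0 := by
    simp [picardResidual]
  -- the solution curve with parameters `(s, x)`
  let S : ℝ × V → C(TimeI, V) := fun y => (e.symm (y.1, y.2, 0)).2.2
  have h0t : ((0 : ℝ), (0 : V), (0 : C(TimeI, V))) ∈ e.target := by
    have := e.map_source h0e
    rwa [he, hzero] at this
  have hι : ContDiff ℝ ∞ (fun y : ℝ × V => (y.1, y.2, (0 : C(TimeI, V)))) := by fun_prop
  have htgt : ∀ᶠ y in 𝓝 (0 : ℝ × V), (y.1, y.2, (0 : C(TimeI, V))) ∈ e.target :=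
    hι.continuous.continuousAt.eventually_mem (e.open_target.mem_nhds h0t)
  have hSsm : ∀ᶠ y in 𝓝 (0 : ℝ × V), ContDiffAt ℝ ∞ S y := by
    filter_upwards [htgt] with y hy
    exact ((hsm _ hy).comp y hι.contDiffAt).snd.snd
  have hS0 : S 0 = 0 := by
    have := e.left_inv h0e
    rw [he, hzero] at this
    change (e.symm 0).2.2 = 0
    rw [this]; rfl
  have hSeq : ∀ y : ℝ × V, (y.1, y.2, (0 : C(TimeI, V))) ∈ e.target →
      e.symm (y.1, y.2, 0) = (y.1, y.2, S y) ∧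
      picardResidual XC (y.1, y.2, S y) = (y.1, y.2, 0) := by
    intro y hy
    have h := e.right_inv hy
    rw [he] at h
    have h1 : (e.symm (y.1, y.2, 0)).1 = y.1 := congrArg (fun q => q.1) h
    have h2 : (e.symm (y.1, y.2, 0)).2.1 = y.2 := congrArg (fun q => q.2.1) h
    have h3 : e.symm (y.1, y.2, 0) = (y.1, y.2, S y) := by
      ext1
      · exact h1
      · ext1
        · exact h2
        · rfl
    exact ⟨h3, by rw [← h3]; exact h⟩
  -- an `ε`-ball inside the source, where `e` is injective, and a neighbourhood of parameters
  -- whose solution curves stay inside that ball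
  obtain ⟨ε, hε, hεsrc⟩ := Metric.isOpen_iff.1 e.open_source _ h0e
  have hSsmall : ∀ᶠ y in 𝓝 (0 : ℝ × V), ‖S y‖ < ε := by
    have hc : ContinuousAt S 0 := hSsm.self_of_nhds.continuousAt
    have := hc.norm
    apply this.eventually_lt_const
    simpa only [hS0, norm_zero] using hε
  obtain ⟨δ, hδ, hδS⟩ := Metric.eventually_nhds_iff.1 (htgt.and hSsmall)
  set δ' := min δ ε
  have hδ' : 0 < δ' := lt_min hδ hε
  -- uniqueness (injectivity of `e` on its source) identifies rescaled solutions
  have hscale : ∀ (s : ℝ) (x : V) (τ : TimeI), |s| < δ' → ‖x‖ < δ' →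
      S (τ * s, x) = (S (s, x)).comp (scaleTime τ) := by
    intro s x τ hs hx
    obtain ⟨hy, hyS⟩ := hδS (y := (s, x)) (by
      rw [dist_zero_right, Prod.norm_def]
      exact (max_lt hs hx).trans_le (min_le_left _ _))
    have hres := picardResidual_scaleTime XC s x _ (hSeq (s, x) hy).2 τ
    have hτs : |(τ : ℝ) * s| < δ' := by
      rw [abs_mul]
      exact (mul_le_of_le_one_left (abs_nonneg _) (abs_le.2 τ.2)).trans_lt hs
    have hmem : ((τ : ℝ) * s, x, (S (s, x)).comp (scaleTime τ)) ∈ e.source := by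
      apply hεsrc
      rw [Metric.mem_ball, dist_zero_right, Prod.norm_def, Prod.norm_def]
      refine max_lt (hτs.trans_le (min_le_right _ _))
        (max_lt (hx.trans_le (min_le_right _ _)) (lt_of_le_of_lt ?_ hyS))
      exact (ContinuousMap.norm_le _ (norm_nonneg _)).2 fun t =>
        (S (s, x)).norm_coe_le_norm _
    have := e.left_inv hmem
    rw [he, hres] at this
    change (e.symm ((τ : ℝ) * s, x, 0)).2.2 = _
    rw [this]
  have hintegral : ∀ (s : ℝ) (x : V) (τ : TimeI), |s| < δ' → ‖x‖ < δ' →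
      S (s, x) τ = x + s • ∫ u in (0 : ℝ)..τ,
        Set.IccExtend neg_one_le_one_real (XC.comp (S (s, x))) u := by
    intro s x τ hs hx
    obtain ⟨hy, -⟩ := hδS (y := (s, x)) (by
      rw [dist_zero_right, Prod.norm_def]
      exact (max_lt hs hx).trans_le (min_le_left _ _))
    have h := congrArg (fun q => q.2.2 τ) (hSeq (s, x) hy).2
    simp only [picardResidual, ContinuousMap.sub_apply, ContinuousMap.smul_apply,
      constCurve_apply, primitiveCurve_apply, ContinuousMap.zero_apply] at h
    rw [sub_sub, sub_eq_zero] at h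
    exact h
  let one : TimeI := ⟨1, by norm_num⟩
  refine ⟨fun y => S y one, ?_, ?_, ?_⟩
  · filter_upwards [hSsm] with y hy
    exact (ContinuousMap.evalCLM ℝ one).contDiff.contDiffAt.comp y hy
  · filter_upwards [Metric.ball_mem_nhds (0 : V) hδ'] with x hx
    rw [hintegral 0 x one (by simpa using hδ') (by simpa using hx), zero_smul, add_zero]
  · have hball : Metric.ball (0 : ℝ × V) (δ' / 2) ∈ 𝓝 (0 : ℝ × V) :=
      Metric.ball_mem_nhds _ (by positivity)
    filter_upwards [hball] with y hy
    obtain ⟨s, x⟩ := y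
    rw [Metric.mem_ball, dist_zero_right, Prod.norm_def, max_lt_iff] at hy
    obtain ⟨hs, hx⟩ := hy
    simp only [Real.norm_eq_abs] at hs hx
    set r := δ' / 2 with hr
    have hrpos : 0 < r := by positivity
    have hrδ : |r| < δ' := by rw [abs_of_pos hrpos]; linarith
    have hxδ : ‖x‖ < δ' := by linarith
    set f := Set.IccExtend neg_one_le_one_real (XC.comp (S (r, x))) with hf
    have hfc : Continuous f := by
      exact (XC.comp (S (r, x))).continuous.Icc_extend' (h := neg_one_le_one_real)
    -- near `s`, all values `φ (s', x)` are read off from the single integral curve `S (r, x)`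
    have hloc : ∀ s' : ℝ, |s'| < r → ∃ h : s' / r ∈ Set.Icc (-1 : ℝ) 1,
        S (s', x) one = S (r, x) ⟨s' / r, h⟩ ∧
        S (s', x) one = x + r • ∫ u in (0 : ℝ)..(s' / r), f u := by
      intro s' hs'
      have hmem : s' / r ∈ Set.Icc (-1 : ℝ) 1 := by
        apply abs_le.1
        rw [abs_div, abs_of_pos hrpos]
        exact (div_le_one hrpos).2 hs'.le
      have h1 := hscale r x ⟨s' / r, hmem⟩ hrδ hxδ
      simp only [div_mul_cancel₀ s' hrpos.ne'] at h1
      have h2 : S (s', x) one = S (r, x) ⟨s' / r, hmem⟩ := by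
        rw [h1]
        change S (r, x) _ = _
        congr 1
        ext
        exact mul_one _
      exact ⟨hmem, h2, by rw [h2]; exact hintegral r x _ hrδ hxδ⟩
    have hder : HasDerivAt (fun s' : ℝ => x + r • ∫ u in (0 : ℝ)..(s' / r), f u)
        (f (s / r)) s := by
      have h1 : HasDerivAt (fun b : ℝ => ∫ u in (0 : ℝ)..b, f u) (f (s / r)) (s / r) :=
        intervalIntegral.integral_hasDerivAt_right (hfc.intervalIntegrable _ _)
          (hfc.stronglyMeasurableAtFilter _ _) hfc.continuousAt
      have h2 := (h1.scomp s ((hasDerivAt_id s).div_const r)).const_smul r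
      refine (h2.const_add x).congr_deriv ?_
      rw [smul_smul, mul_one_div_cancel hrpos.ne', one_smul]
    obtain ⟨hmem, h1, -⟩ := hloc s hs
    have hval : f (s / r) = X (S (s, x) one) := by
      rw [hf, Set.IccExtend_of_mem _ _ hmem, h1]
      rfl
    rw [← hval]
    refine hder.congr_of_eventuallyEq ?_
    have : ∀ᶠ s' in 𝓝 s, |s'| < r := continuous_abs.continuousAt.eventually_lt_const hs
    filter_upwards [this] with s' hs'
    obtain ⟨-, -, h3⟩ := hloc s' hs'
    exact h3
end Flow

/-! ### Kernel fields and propagation of isotropy -/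

/-- A map smooth near the origin agrees there with a globally smooth one. -/
theorem exists_global_smooth {V G : Type} [NormedAddCommGroup V] [NormedSpace ℝ V]
    [FiniteDimensional ℝ V] [NormedAddCommGroup G] [NormedSpace ℝ G] (f : V → G)
    (hf : ∀ᶠ x in 𝓝 0, ContDiffAt ℝ ∞ f x) :
    ∃ g : V → G, ContDiff ℝ ∞ g ∧ ∀ᶠ x in 𝓝 0, g x = f x := by
  obtain ⟨r, hr, hrf⟩ := Metric.eventually_nhds_iff.1 hf
  let χ : ContDiffBump (0 : V) := ⟨r / 4, r / 2, by positivity, by linarith⟩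
  refine ⟨fun x => χ x • f x, contDiff_iff_contDiffAt.2 fun x => ?_, ?_⟩
  · by_cases hx : dist x 0 < r
    · exact χ.contDiff.contDiffAt.smul (hrf hx)
    · have hx' : x ∉ tsupport χ := by
        rw [χ.tsupport_eq, Metric.mem_closedBall]
        change ¬ dist x 0 ≤ r / 2
        linarith
      have h0 : (fun x => χ x • f x) =ᶠ[𝓝 x] fun _ => 0 := by
        filter_upwards [(isClosed_tsupport χ).isOpen_compl.mem_nhds hx'] with y hy
        rw [image_eq_zero_of_notMem_tsupport hy, zero_smul]
      exact contDiffAt_const.congr_of_eventuallyEq h0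
  · filter_upwards [χ.eventuallyEq_one] with x hx
    rw [hx, Pi.one_apply, one_smul]

/-- A smooth family of linear maps of constant rank has smooth kernel sections: any `v₀ ∈ ker (A 0)`
extends to a smooth vector field `X` with `X x ∈ ker (A x)` near the origin. -/
theorem exists_kernel_field {V G : Type} [NormedAddCommGroup V] [NormedSpace ℝ V]
    [FiniteDimensional ℝ V] [NormedAddCommGroup G] [NormedSpace ℝ G] [FiniteDimensional ℝ G]
    (A : V → V →L[ℝ] G) (hA : ∀ᶠ x in 𝓝 0, ContDiffAt ℝ ∞ A x) (m : ℕ)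
    (hm : ∀ᶠ x in 𝓝 0, Module.finrank ℝ (A x : V →ₗ[ℝ] G).ker = m)
    (v₀ : V) (hv : A 0 v₀ = 0) :
    ∃ X : V → V, ContDiff ℝ ∞ X ∧ X 0 = v₀ ∧ ∀ᶠ x in 𝓝 0, A x (X x) = 0 := by
  let K := (A 0 : V →ₗ[ℝ] G).ker
  let R := (A 0 : V →ₗ[ℝ] G).range
  obtain ⟨πK, hπK⟩ := K.subtype.exists_leftInverse_of_injective K.ker_subtype
  obtain ⟨πR, hπR⟩ := R.subtype.exists_leftInverse_of_injective R.ker_subtype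
  have hπK' : ∀ k : K, πK k = k := fun k => LinearMap.congr_fun hπK k
  have hπR' : ∀ k : R, πR k = k := fun k => LinearMap.congr_fun hπR k
  -- `B x` is invertible near `0`, and `X x` is the solution of `B x (X x) = (0, πK v₀)`
  let B : V → V →L[ℝ] R × K := fun x =>
    (πR.toContinuousLinearMap.comp (A x)).prod πK.toContinuousLinearMap
  have hrk : Module.finrank ℝ R + m = Module.finrank ℝ V := by
    rw [← hm.self_of_nhds]; exact LinearMap.finrank_range_add_finrank_ker _
  have hinj : Function.Injective (B 0 : V →ₗ[ℝ] R × K) := by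
    rw [← LinearMap.ker_eq_bot, LinearMap.ker_eq_bot']
    intro v hv
    have h1 : πR (A 0 v) = 0 := congrArg Prod.fst hv
    have h2 : πK v = 0 := congrArg Prod.snd hv
    have h3 : A 0 v = 0 := by
      have := hπR' ⟨A 0 v, LinearMap.mem_range_self _ v⟩
      rw [h1] at this
      exact (congrArg Subtype.val this).symm
    have := hπK' ⟨v, h3⟩
    rw [h2] at this
    exact (congrArg Subtype.val this).symm
  have hdim : Module.finrank ℝ V = Module.finrank ℝ (R × K) := by
    rw [Module.finrank_prod, ← hrk, ← hm.self_of_nhds]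
  let e : V ≃L[ℝ] R × K :=
    (LinearEquiv.ofInjectiveOfFinrankEq _ hinj hdim).toContinuousLinearEquiv
  have he : (e : V →L[ℝ] R × K) = B 0 := by ext v <;> rfl
  have hBsm : ∀ᶠ x in 𝓝 0, ContDiffAt ℝ ∞ B x := by
    filter_upwards [hA] with x hx
    have hB : B = fun x => ((ContinuousLinearMap.inl ℝ R K).comp πR.toContinuousLinearMap).comp
        (A x) + (ContinuousLinearMap.inr ℝ R K).comp πK.toContinuousLinearMap := by
      funext x
      ext v <;> simp [B]
    rw [hB]
    exact (contDiffAt_const.clm_comp hx).add contDiffAt_const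
  have hBinv : ∀ᶠ x in 𝓝 0, B x ∈ Set.range
      (ContinuousLinearEquiv.toContinuousLinearMap : (V ≃L[ℝ] R × K) → (V →L[ℝ] R × K)) := by
    apply hBsm.self_of_nhds.continuousAt
    rw [← he]
    exact e.nhds
  let Y : V → V := fun x => (B x).inverse (0, πK v₀)
  have hY : ∀ᶠ x in 𝓝 0, ContDiffAt ℝ ∞ Y x := by
    filter_upwards [hBsm, hBinv] with x hx ⟨a, ha⟩
    have h1 : ContDiffAt ℝ ∞ ContinuousLinearMap.inverse (B x) := by
      rw [← ha]; exact contDiffAt_map_inverse a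
    exact (h1.comp x hx).clm_apply contDiffAt_const
  obtain ⟨X, hX, hXY⟩ := exists_global_smooth Y hY
  refine ⟨X, hX, ?_, ?_⟩
  · rw [hXY.self_of_nhds]
    change (B 0).inverse (0, πK v₀) = v₀
    rw [← he, ContinuousLinearMap.inverse_equiv]
    change e.symm _ = _
    rw [ContinuousLinearEquiv.symm_apply_eq]
    change _ = B 0 v₀
    simp [B, hv]
  · filter_upwards [hXY, hBinv, hm] with x hx ⟨a, ha⟩ hmx
    rw [hx]
    have h1 : B x (Y x) = (0, πK v₀) := by
      change B x ((B x).inverse _) = _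
      rw [← ha, ContinuousLinearMap.inverse_equiv]
      exact a.apply_symm_apply _
    have h2 : πR (A x (Y x)) = 0 := congrArg Prod.fst h1
    -- constant rank: the kernels of `A x` and of `πR ∘ A x` have the same dimension, so coincide
    have hle : (A x : V →ₗ[ℝ] G).ker ≤ (πR ∘ₗ (A x : V →ₗ[ℝ] G)).ker :=
      LinearMap.ker_le_ker_comp _ _
    have hsurj : (πR ∘ₗ (A x : V →ₗ[ℝ] G)).range = ⊤ := by
      rw [LinearMap.range_eq_top]
      intro r
      refine ⟨a.symm (r, 0), ?_⟩
      have : B x (a.symm (r, 0)) = (r, 0) := by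
        rw [← ha]; exact a.apply_symm_apply _
      exact congrArg Prod.fst this
    have hfr := LinearMap.finrank_range_add_finrank_ker (πR ∘ₗ (A x : V →ₗ[ℝ] G))
    rw [hsurj, finrank_top] at hfr
    have heq := Submodule.eq_of_le_of_finrank_eq hle (by omega)
    have : Y x ∈ (A x : V →ₗ[ℝ] G).ker := by rw [heq]; exact h2
    exact this

/-- Let `z : ℝ × W → F` be such that `∂z/∂s` is `om`-orthogonal to all `∂z/∂w`. If the slice
`z (0, ·)` is isotropic, then so is `z`. This is Cartan's formula for the closed form `z^* om`: with
`∂/∂s` in its kernel, the form does not depend on `s`. The closedness enters as the symmetry of the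
second derivative of `z`. -/
theorem isotropic_flowout {W F : Type} [NormedAddCommGroup W] [NormedSpace ℝ W]
    [NormedAddCommGroup F] [NormedSpace ℝ F] (om : F →L[ℝ] F →L[ℝ] ℝ) (hom : ∀ u, om u u = 0)
    (z : ℝ × W → F) (hz : ∀ᶠ y in 𝓝 0, ContDiffAt ℝ ∞ z y)
    (hker : ∀ᶠ y in 𝓝 (0 : ℝ × W), ∀ a : W, om (fderiv ℝ z y (1, 0)) (fderiv ℝ z y (0, a)) = 0)
    (hslice : ∀ᶠ w in 𝓝 (0 : W), ∀ a b : W,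
      om (fderiv ℝ z (0, w) (0, a)) (fderiv ℝ z (0, w) (0, b)) = 0) :
    ∀ᶠ y in 𝓝 (0 : ℝ × W), ∀ u v, om (fderiv ℝ z y u) (fderiv ℝ z y v) = 0 := by
  have hskew : ∀ u v, om u v = - om v u := by
    intro u v
    have := hom (u + v)
    simp only [map_add, add_apply, hom] at this
    linarith
  obtain ⟨r, hr, hrz⟩ := Metric.eventually_nhds_iff.1 (hz.and hker)
  obtain ⟨r', hr', hrw⟩ := Metric.eventually_nhds_iff.1 hslice
  have hball : Metric.ball (0 : ℝ × W) (min r r') ∈ 𝓝 (0 : ℝ × W) :=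
    Metric.ball_mem_nhds _ (lt_min hr hr')
  have hmem : ∀ (s : ℝ) (w : W), |s| < r → ‖w‖ < r → dist (s, w) 0 < r := by
    intro s w hs hw
    rw [dist_zero_right, Prod.norm_def]
    exact max_lt hs hw
  -- the derivative of `z` is differentiable on the ball, with symmetric second derivative
  have hD : ∀ y, dist y (0 : ℝ × W) < r →
      HasFDerivAt (fderiv ℝ z) (fderiv ℝ (fderiv ℝ z) y) y := fun y hy =>
    (((hrz hy).1.fderiv_right (m := ∞) (by simp)).differentiableAt (by simp)).hasFDerivAt
  have hsymm : ∀ y, dist y (0 : ℝ × W) < r → ∀ u v,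
      fderiv ℝ (fderiv ℝ z) y u v = fderiv ℝ (fderiv ℝ z) y v u := fun y hy =>
    (hrz hy).1.isSymmSndFDerivAt (by
      rw [minSmoothness_of_isRCLikeNormedField]
      exact WithTop.coe_le_coe.2 (le_top : (2 : ℕ∞) ≤ ⊤))
  have hpair : ∀ y, dist y (0 : ℝ × W) < r → ∀ p q : ℝ × W,
      HasFDerivAt (fun y => om (fderiv ℝ z y p) (fderiv ℝ z y q))
        ((om (fderiv ℝ z y p)).comp ((fderiv ℝ (fderiv ℝ z) y).flip q) +
          (om.flip (fderiv ℝ z y q)).comp ((fderiv ℝ (fderiv ℝ z) y).flip p)) y := by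
    intro y hy p q
    have h1 := (hD y hy).clm_apply (hasFDerivAt_const p y)
    have h2 := (hD y hy).clm_apply (hasFDerivAt_const q y)
    have h3 := (om.hasFDerivAt.comp y h1).clm_apply h2
    refine h3.congr_fderiv ?_
    ext u <;> simp
  -- differentiating `om (z_s, z_a) = 0` in the direction `b`
  have hdiff : ∀ y, dist y (0 : ℝ × W) < r → ∀ a b : W,
      om (fderiv ℝ z y (1, 0)) (fderiv ℝ (fderiv ℝ z) y (0, b) (0, a)) +
        om (fderiv ℝ (fderiv ℝ z) y (0, b) (1, 0)) (fderiv ℝ z y (0, a)) = 0 := by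
    intro y hy a b
    have h1 := hpair y hy (1, 0) (0, a)
    have h2 : (fun y => om (fderiv ℝ z y (1, 0)) (fderiv ℝ z y (0, a))) =ᶠ[𝓝 y] fun _ => 0 := by
      filter_upwards [Metric.isOpen_ball.mem_nhds (Metric.mem_ball.2 hy)] with y' hy'
      exact (hrz hy').2 a
    have h3 := h1.unique ((hasFDerivAt_const (0 : ℝ) y).congr_of_eventuallyEq h2)
    simpa using congrArg (fun L => L ((0 : ℝ), b)) h3
  filter_upwards [hball] with y hy
  obtain ⟨s, w⟩ := y
  rw [Metric.mem_ball, dist_zero_right, Prod.norm_def, max_lt_iff] at hy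
  simp only [Real.norm_eq_abs, lt_min_iff] at hy
  obtain ⟨⟨hs, -⟩, hw, hw'⟩ := hy
  have hconst : ∀ a b : W, om (fderiv ℝ z (s, w) (0, a)) (fderiv ℝ z (s, w) (0, b)) = 0 := by
    intro a b
    have hder : ∀ t ∈ Metric.ball (0 : ℝ) r, HasDerivAt
        (fun t : ℝ => om (fderiv ℝ z (t, w) (0, a)) (fderiv ℝ z (t, w) (0, b))) 0 t := by
      intro t ht
      have ht' : dist (t, w) (0 : ℝ × W) < r :=
        hmem t w (by simpa [Real.norm_eq_abs] using ht) hw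
      have h1 := (hpair (t, w) ht' (0, a) (0, b)).comp_hasDerivAt t
        ((hasDerivAt_id t).prodMk (hasDerivAt_const t w))
      refine h1.congr_deriv ?_
      have ha := hdiff (t, w) ht' a b
      have hb := hdiff (t, w) ht' b a
      have h2 := hsymm (t, w) ht' (0, b) (0, a)
      have h3 := hsymm (t, w) ht' (0, b) (1, 0)
      have h4 := hsymm (t, w) ht' (0, a) (1, 0)
      rw [h2, h3] at ha
      rw [h4] at hb
      have h5 := hskew (fderiv ℝ z (t, w) (0, a)) (fderiv ℝ (fderiv ℝ z) (t, w) (1, 0) (0, b))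
      simp only [add_apply, ContinuousLinearMap.comp_apply,
        ContinuousLinearMap.flip_apply]
      linarith
    have := Metric.isOpen_ball.is_const_of_deriv_eq_zero
      (convex_ball (0 : ℝ) r).isPreconnected
      (fun t ht => (hder t ht).differentiableAt.differentiableWithinAt)
      (fun t ht => (hder t ht).deriv) (x := s) (y := 0)
      (by simpa [Real.norm_eq_abs] using hs) (Metric.mem_ball_self hr)
    rw [this]
    exact hrw (by simpa using hw') a b
  have hk := (hrz (hmem s w hs hw)).2
  intro u v
  have hdec : ∀ u : ℝ × W, u = u.1 • ((1 : ℝ), (0 : W)) + (0, u.2) := by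
    intro u; ext <;> simp
  rw [hdec u, hdec v]
  have hk' := fun a => (hskew (fderiv ℝ z (s, w) (0, a)) (fderiv ℝ z (s, w) (1, 0)))
  simp only [map_add, map_smul, add_apply, smul_apply,
    hom, hk, hk', hconst]
  simp

/-! ### Isotropic germs for forms of constant rank -/

/-- The pullback `(u, v) ↦ om (Dψ_x u, Dψ_x v)` of the constant form `om` by `ψ` at `x`. -/
def pullForm {V F : Type} [NormedAddCommGroup V] [NormedSpace ℝ V]
    [NormedAddCommGroup F] [NormedSpace ℝ F] (om : F →L[ℝ] F →L[ℝ] ℝ) (ψ : V → F) (x : V) :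
    V →L[ℝ] V →L[ℝ] ℝ :=
  ((ContinuousLinearMap.compL ℝ V F ℝ).flip (fderiv ℝ ψ x)).comp (om.comp (fderiv ℝ ψ x))

theorem pullForm_apply {V F : Type} [NormedAddCommGroup V] [NormedSpace ℝ V]
    [NormedAddCommGroup F] [NormedSpace ℝ F] (om : F →L[ℝ] F →L[ℝ] ℝ) (ψ : V → F) (x u v : V) :
    pullForm om ψ x u v = om (fderiv ℝ ψ x u) (fderiv ℝ ψ x v) := rfl

theorem contDiffAt_pullForm {V F : Type} [NormedAddCommGroup V] [NormedSpace ℝ V]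
    [NormedAddCommGroup F] [NormedSpace ℝ F] (om : F →L[ℝ] F →L[ℝ] ℝ) (ψ : V → F) (x : V)
    (h : ContDiffAt ℝ ∞ ψ x) : ContDiffAt ℝ ∞ (pullForm om ψ) x := by
  have h1 : ContDiffAt ℝ ∞ (fderiv ℝ ψ) x := h.fderiv_right (by simp)
  have h0 : ContDiff ℝ ∞ (fun T : V →L[ℝ] F => (ContinuousLinearMap.compL ℝ V F ℝ).flip T) :=
    ContinuousLinearMap.contDiff _
  have h2 : ContDiffAt ℝ ∞
      (fun x => (ContinuousLinearMap.compL ℝ V F ℝ).flip (fderiv ℝ ψ x)) x :=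
    h0.comp_contDiffAt x h1
  exact h2.clm_comp (contDiffAt_const.clm_comp h1)

section LinearAlgebra
variable {V : Type} [NormedAddCommGroup V] [NormedSpace ℝ V] [FiniteDimensional ℝ V]

/-- Restricting an alternating form to a hyperplane transverse to its kernel lowers the dimension of
the kernel by one. -/
theorem finrank_ker_restrict_of_ker (B : V →L[ℝ] V →L[ℝ] ℝ) (hB : ∀ u, B u u = 0)
    (l : V →ₗ[ℝ] ℝ) (B' : l.ker →L[ℝ] l.ker →L[ℝ] ℝ) (hB' : ∀ p q, B' p q = B p q)
    (x : V) (hx : B x = 0) (hl : l x ≠ 0) :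
    Module.finrank ℝ (B' : l.ker →ₗ[ℝ] l.ker →L[ℝ] ℝ).ker + 1 =
      Module.finrank ℝ (B : V →ₗ[ℝ] V →L[ℝ] ℝ).ker := by
  have hskew : ∀ u v, B u v = - B v u := by
    intro u v
    have := hB (u + v)
    simp only [map_add, add_apply, hB] at this
    linarith
  set K := (B : V →ₗ[ℝ] V →L[ℝ] ℝ).ker with hK
  let g := l.domRestrict K
  have hg : g.range = ⊤ := by
    rw [LinearMap.range_eq_top]
    intro c
    refine ⟨(c / l x) • ⟨x, hx⟩, ?_⟩
    simp [g, div_mul_cancel₀ _ hl]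
  have h1 := LinearMap.finrank_range_add_finrank_ker g
  rw [hg, finrank_top, Module.finrank_self] at h1
  have h2 : g.ker.map K.subtype = ((B' : l.ker →ₗ[ℝ] l.ker →L[ℝ] ℝ).ker).map l.ker.subtype := by
    ext v
    constructor
    · rintro ⟨⟨v, hv⟩, hv', rfl⟩
      have hv'' : l v = 0 := hv'
      have hv0 : B v = 0 := hv
      refine ⟨⟨v, hv''⟩, ?_, rfl⟩
      change B' _ = 0
      ext q
      rw [hB']
      simp [hv0]
    · rintro ⟨⟨v, hv⟩, hv', rfl⟩
      have hv0 : B' ⟨v, hv⟩ = 0 := hv'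
      refine ⟨⟨v, ?_⟩, hv, rfl⟩
      change B v = 0
      ext u
      have hu : u - (l u / l x) • x ∈ l.ker := by
        rw [LinearMap.mem_ker]; simp [div_mul_cancel₀ _ hl]
      have h3 : B v (u - (l u / l x) • x) = 0 := by
        have := hB' ⟨v, hv⟩ ⟨_, hu⟩
        rw [hv0] at this
        simpa using this.symm
      have h4 : B v x = 0 := by rw [hskew, hx]; simp
      rw [map_sub, map_smul, h4, smul_zero, sub_zero] at h3
      simpa using h3
  have h3 := congrArg (fun S : Submodule ℝ V => Module.finrank ℝ S) h2
  simp only [Submodule.finrank_map_subtype_eq] at h3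
  omega

/-- The restriction of a nondegenerate alternating form to a hyperplane `ker l` has a
one-dimensional kernel, spanned by the vector representing `l`. -/
theorem finrank_ker_restrict_of_nondegenerate (B : V →L[ℝ] V →L[ℝ] ℝ) (hB : ∀ u, B u u = 0)
    (hB0 : (B : V →ₗ[ℝ] V →L[ℝ] ℝ).ker = ⊥)
    (l : V →ₗ[ℝ] ℝ) (hl : l ≠ 0) (B' : l.ker →L[ℝ] l.ker →L[ℝ] ℝ)
    (hB' : ∀ p q, B' p q = B p q) :
    Module.finrank ℝ (B' : l.ker →ₗ[ℝ] l.ker →L[ℝ] ℝ).ker = 1 := by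
  let T : V →ₗ[ℝ] V →ₗ[ℝ] ℝ :=
    (LinearMap.toContinuousLinearMap (𝕜 := ℝ) (E := V) (F' := ℝ)).symm.toLinearMap ∘ₗ
      (B : V →ₗ[ℝ] V →L[ℝ] ℝ)
  have hT : ∀ u v, T u v = B u v := fun u v => rfl
  have hTinj : Function.Injective T := by
    intro u v huv
    have : u - v ∈ (B : V →ₗ[ℝ] V →L[ℝ] ℝ).ker := by
      change B (u - v) = 0
      ext w
      have := LinearMap.congr_fun huv w
      rw [hT, hT] at this
      simp [this]
    rw [hB0] at this
    exact sub_eq_zero.1 this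
  have hTsurj : Function.Surjective T :=
    (LinearMap.injective_iff_surjective_of_finrank_eq_finrank
      (Subspace.dual_finrank_eq (K := ℝ) (V := V)).symm).1 hTinj
  obtain ⟨u, hu⟩ := hTsurj l
  have hu' : ∀ v, B u v = l v := fun v => LinearMap.congr_fun hu v
  have hul : u ∈ l.ker := by rw [LinearMap.mem_ker, ← hu', hB]
  have hu0 : u ≠ 0 := by
    rintro rfl
    apply hl
    rw [← hu, map_zero]
  have huB : (⟨u, hul⟩ : l.ker) ∈ (B' : l.ker →ₗ[ℝ] l.ker →L[ℝ] ℝ).ker := by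
    change B' _ = 0
    ext q
    rw [hB', hu']
    exact q.2
  refine (finrank_eq_one_iff_of_nonzero' (⟨⟨u, hul⟩, huB⟩ :
    (B' : l.ker →ₗ[ℝ] l.ker →L[ℝ] ℝ).ker) ?_).2 ?_
  · intro h
    exact hu0 (congrArg (fun q : (B' : l.ker →ₗ[ℝ] l.ker →L[ℝ] ℝ).ker => ((q : l.ker) : V)) h)
  · rintro ⟨⟨v, hv⟩, hvB⟩
    have hv0 : B' ⟨v, hv⟩ = 0 := hvB
    have hle : ⨅ _ : Unit, l.ker ≤ (T v).ker := by
      simp only [ciInf_const]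
      intro q hq
      rw [LinearMap.mem_ker, hT]
      have := hB' ⟨v, hv⟩ ⟨q, hq⟩
      rw [hv0] at this
      simpa using this.symm
    have := mem_span_of_iInf_ker_le_ker (L := fun _ : Unit => l) hle
    rw [Set.range_const, Submodule.mem_span_singleton] at this
    obtain ⟨c, hc⟩ := this
    refine ⟨c, ?_⟩
    ext
    change c • u = v
    apply hTinj
    rw [map_smul, hu, hc]

end LinearAlgebra

/-- If the pullback of `om` by `ψ` has constant kernel dimension `m` near `0 ∈ V`, then there is an
immersed isotropic germ `j : W → V` through `0` of the maximal dimension `(dim V + m) / 2`.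
Induction on `dim V`, by restriction to a hyperplane. -/
theorem exists_isotropic_immersion {F : Type} [NormedAddCommGroup F] [NormedSpace ℝ F]
    (om : F →L[ℝ] F →L[ℝ] ℝ) (hom : ∀ u, om u u = 0) (d : ℕ) :
    ∀ (V : Type) [NormedAddCommGroup V] [NormedSpace ℝ V] [FiniteDimensional ℝ V]
      (_ : Module.finrank ℝ V = d) (ψ : V → F) (_ : ∀ᶠ x in 𝓝 0, ContDiffAt ℝ ∞ ψ x) (m : ℕ)
      (_ : ∀ᶠ x in 𝓝 0, Module.finrank ℝ (pullForm om ψ x : V →ₗ[ℝ] V →L[ℝ] ℝ).ker = m),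
      ∃ (W : Type) (_ : NormedAddCommGroup W) (_ : NormedSpace ℝ W)
        (_ : FiniteDimensional ℝ W) (j : W → V),
        2 * Module.finrank ℝ W = d + m ∧ j 0 = 0 ∧ (∀ᶠ w in 𝓝 0, ContDiffAt ℝ ∞ j w) ∧
        Function.Injective (fderiv ℝ j 0) ∧
        ∀ᶠ w in 𝓝 0, ∀ a b, om (fderiv ℝ (ψ ∘ j) w a) (fderiv ℝ (ψ ∘ j) w b) = 0 := by
  induction d with
  | zero =>
    intro V _ _ _ hd ψ hψ m hm
    have hsub : Subsingleton V := Module.finrank_zero_iff.1 hd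
    have hm0 : m = 0 := by
      rw [← hm.self_of_nhds]
      exact Module.finrank_zero_of_subsingleton
    refine ⟨V, inferInstance, inferInstance, inferInstance, id, by omega, rfl,
      Filter.Eventually.of_forall fun w => contDiffAt_id,
      Function.injective_of_subsingleton _, Filter.Eventually.of_forall fun w a b => ?_⟩
    rw [Subsingleton.elim a 0]; simp
  | succ d ih =>
    intro V _ _ _ hd ψ hψ m hm
    have halt : ∀ x u, pullForm om ψ x u u = 0 := fun x u => hom _
    have hdimP : ∀ l : V →ₗ[ℝ] ℝ, l ≠ 0 → Module.finrank ℝ l.ker = d := by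
      intro l hl
      have h1 := LinearMap.finrank_range_add_finrank_ker l
      rw [LinearMap.range_eq_top.2 (LinearMap.surjective hl), finrank_top,
        Module.finrank_self] at h1
      omega
    have hι : ∀ l : V →ₗ[ℝ] ℝ, Filter.Tendsto (fun p : l.ker => (p : V)) (𝓝 0) (𝓝 0) :=
      fun l => continuous_subtype_val.tendsto' _ _ rfl
    have hrestr : ∀ l : V →ₗ[ℝ] ℝ, ∀ᶠ p in 𝓝 (0 : l.ker),
        ∀ q q' : l.ker, pullForm om (fun p : l.ker => ψ p) p q q' = pullForm om ψ p q q' := by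
      intro l
      filter_upwards [(hι l).eventually hψ] with p hp q q'
      have h1 : HasFDerivAt (fun p : l.ker => ψ p) ((fderiv ℝ ψ p).comp l.ker.subtypeL) p :=
        (hp.differentiableAt (by simp)).hasFDerivAt.comp p l.ker.subtypeL.hasFDerivAt
      rw [pullForm_apply, h1.fderiv]
      rfl
    have hψP : ∀ l : V →ₗ[ℝ] ℝ, ∀ᶠ p in 𝓝 (0 : l.ker),
        ContDiffAt ℝ ∞ (fun p : l.ker => ψ p) p := by
      intro l
      filter_upwards [(hι l).eventually hψ] with p hp
      exact hp.comp p l.ker.subtypeL.contDiff.contDiffAt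
    rcases Nat.eq_zero_or_pos m with hm0 | hmpos
    · -- Nondegenerate case: the pullback to any hyperplane has one-dimensional kernel, and an
      -- isotropic germ in the hyperplane already has the right dimension.
      subst hm0
      have : Nontrivial V := Module.nontrivial_of_finrank_pos (R := ℝ) (by omega)
      obtain ⟨v, hv⟩ := exists_ne (0 : V)
      obtain ⟨lc, hlc⟩ := SeparatingDual.exists_eq_one (R := ℝ) hv
      let l : V →ₗ[ℝ] ℝ := lc
      have hl : l ≠ 0 := by
        intro h
        have : l v = 0 := by rw [h]; rfl
        exact one_ne_zero (hlc.symm.trans this)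
      obtain ⟨W, i1, i2, i3, j, hdim, hj0, hj, hinj, hiso⟩ :=
        ih l.ker (hdimP l hl) (fun p => ψ p) (hψP l) 1 (by
          filter_upwards [hrestr l, (hι l).eventually hm] with p hp hmp
          exact finrank_ker_restrict_of_nondegenerate _ (halt p)
            (Submodule.finrank_eq_zero.1 hmp) l hl _ hp)
      refine ⟨W, i1, i2, i3, fun w => j w, by omega, by simp [hj0], ?_, ?_, hiso⟩
      · filter_upwards [hj] with w hw
        exact l.ker.subtypeL.contDiff.contDiffAt.comp w hw
      · have h1 : HasFDerivAt (fun w => (j w : V)) (l.ker.subtypeL.comp (fderiv ℝ j 0)) 0 :=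
          l.ker.subtypeL.hasFDerivAt.comp 0
            (hj.self_of_nhds.differentiableAt (by simp)).hasFDerivAt
        rw [h1.fderiv]
        exact Subtype.val_injective.comp hinj
    · -- Degenerate case: take a field `X` in the kernel, an isotropic germ `j'` in a hyperplane
      -- transverse to `X`, and sweep it out by the flow of `X`.
      have hpos : 0 < Module.finrank ℝ (pullForm om ψ 0 : V →ₗ[ℝ] V →L[ℝ] ℝ).ker := by
        rw [hm.self_of_nhds]; exact hmpos
      have := Module.nontrivial_of_finrank_pos (R := ℝ) hpos
      obtain ⟨⟨v₀, hv₀⟩, hv₀ne⟩ := exists_ne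
        (0 : (pullForm om ψ 0 : V →ₗ[ℝ] V →L[ℝ] ℝ).ker)
      have hv0 : v₀ ≠ 0 := fun h => hv₀ne (Subtype.ext h)
      obtain ⟨X, hXsm, hX0, hXker⟩ := exists_kernel_field (pullForm om ψ)
        (hψ.mono fun x hx => contDiffAt_pullForm om ψ x hx) m hm v₀ hv₀
      obtain ⟨lc, hlc⟩ := SeparatingDual.exists_eq_one (R := ℝ) hv0
      let l : V →ₗ[ℝ] ℝ := lc
      have hlv : l v₀ = 1 := hlc
      have hl : l ≠ 0 := by
        intro h
        rw [h] at hlv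
        exact zero_ne_one hlv
      have hlX : ∀ᶠ x in 𝓝 (0 : V), l (X x) ≠ 0 := by
        have hc : ContinuousAt (fun x => lc (X x)) 0 :=
          (lc.continuous.comp hXsm.continuous).continuousAt
        apply hc.eventually_ne
        rw [hX0, hlc]
        exact one_ne_zero
      obtain ⟨W, i1, i2, i3, j', hdim, hj0, hj, hinj, hiso⟩ :=
        ih l.ker (hdimP l hl) (fun p => ψ p) (hψP l) (m - 1) (by
          filter_upwards [hrestr l, (hι l).eventually hm, (hι l).eventually hXker,
            (hι l).eventually hlX] with p hp hmp hk hlx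
          have := finrank_ker_restrict_of_ker _ (halt p) l _ hp (X p) hk hlx
          omega)
      obtain ⟨φ, hφsm, hφ0, hφder⟩ := exists_smooth_flow X hXsm
      let κ : ℝ × W → ℝ × V := fun y => (y.1, (j' y.2 : V))
      have hj2 : ∀ᶠ y in 𝓝 (0 : ℝ × W), ContDiffAt ℝ ∞ j' y.2 :=
        (continuous_snd.tendsto' (0 : ℝ × W) (0 : W) rfl).eventually hj
      have hκsm : ∀ᶠ y in 𝓝 (0 : ℝ × W), ContDiffAt ℝ ∞ κ y := by
        filter_upwards [hj2] with y hy
        exact contDiffAt_fst.prodMk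
          (l.ker.subtypeL.contDiff.contDiffAt.comp y (hy.comp y contDiffAt_snd))
      have hκ0 : κ 0 = 0 := by simp [κ, hj0]
      have hκt : Filter.Tendsto κ (𝓝 0) (𝓝 0) := by
        have := hκsm.self_of_nhds.continuousAt.tendsto
        rwa [hκ0] at this
      have hφ00 : φ 0 = 0 := hφ0.self_of_nhds
      let j : ℝ × W → V := fun y => φ (κ y)
      have hjsm : ∀ᶠ y in 𝓝 (0 : ℝ × W), ContDiffAt ℝ ∞ j y := by
        filter_upwards [hκsm, hκt.eventually hφsm] with y h1 h2
        exact h2.comp y h1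
      have hj00 : j 0 = 0 := by simp only [j, hκ0, hφ00]
      have hjt : Filter.Tendsto j (𝓝 0) (𝓝 0) := by
        have := hjsm.self_of_nhds.continuousAt.tendsto
        rwa [hj00] at this
      have hzsm : ∀ᶠ y in 𝓝 (0 : ℝ × W), ContDiffAt ℝ ∞ (ψ ∘ j) y := by
        filter_upwards [hjsm, hjt.eventually hψ] with y h1 h2
        exact h2.comp y h1
      have hjder : ∀ᶠ y in 𝓝 (0 : ℝ × W), fderiv ℝ j y (1, 0) = X (j y) := by
        filter_upwards [hjsm, hκt.eventually hφder] with y h1 h2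
        have h3 := (h1.differentiableAt (by simp)).hasFDerivAt.comp_hasDerivAt y.1
          ((hasDerivAt_id y.1).prodMk (hasDerivAt_const y.1 y.2))
        exact h3.unique h2
      have hslice : ∀ᶠ w in 𝓝 (0 : W), j (0, w) = j' w := by
        have hj't : Filter.Tendsto (fun w => (j' w : V)) (𝓝 0) (𝓝 0) := by
          have := (hι l).comp
            (show Filter.Tendsto j' (𝓝 0) (𝓝 0) by
              have := hj.self_of_nhds.continuousAt.tendsto
              rwa [hj0] at this)
          exact this
        exact hj't.eventually hφ0
      have hinW : Filter.Tendsto (fun w : W => ((0 : ℝ), w)) (𝓝 0) (𝓝 0) :=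
        (Continuous.prodMk_right (0 : ℝ)).tendsto' _ _ rfl
      refine ⟨ℝ × W, inferInstance, inferInstance, inferInstance, j, ?_, hj00, hjsm, ?_, ?_⟩
      · rw [Module.finrank_prod, Module.finrank_self]
        omega
      · have h0 : ∀ w : W, fderiv ℝ j 0 (0, w) = fderiv ℝ j' 0 w := by
          intro w
          have h1 : HasFDerivAt (fun w : W => j (0, w))
              ((fderiv ℝ j 0).comp (ContinuousLinearMap.inr ℝ ℝ W)) 0 :=
            HasFDerivAt.comp (0 : W) (g := j)
              (hjsm.self_of_nhds.differentiableAt (by simp)).hasFDerivAt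
              (ContinuousLinearMap.inr ℝ ℝ W).hasFDerivAt
          have h2 : HasFDerivAt (fun w => (j' w : V)) (l.ker.subtypeL.comp (fderiv ℝ j' 0)) 0 :=
            l.ker.subtypeL.hasFDerivAt.comp 0
              (hj.self_of_nhds.differentiableAt (by simp)).hasFDerivAt
          have h3 := h1.unique (h2.congr_of_eventuallyEq hslice)
          exact congrArg (fun L => L w) h3
        rw [injective_iff_map_eq_zero]
        rintro ⟨s, w⟩ hsw
        have hdec : ((s, w) : ℝ × W) = s • ((1 : ℝ), (0 : W)) + (0, w) := by ext <;> simp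
        rw [hdec, map_add, map_smul, hjder.self_of_nhds, h0, hj00, hX0] at hsw
        have hlw : l (fderiv ℝ j' 0 w : V) = 0 := (fderiv ℝ j' 0 w).2
        have hs : s = 0 := by
          have := congrArg l hsw
          rw [map_add, map_smul, hlv, hlw, map_zero] at this
          simpa using this
        subst hs
        rw [zero_smul, zero_add] at hsw
        have : w = 0 := (injective_iff_map_eq_zero _).1 hinj w (Subtype.ext hsw)
        rw [this]; rfl
      · refine isotropic_flowout om hom (ψ ∘ j) hzsm ?_ ?_
        · filter_upwards [hjsm, hjt.eventually hψ, hjder, hjt.eventually hXker]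
            with y h1 h2 h3 h4 a
          have h5 : fderiv ℝ (ψ ∘ j) y = (fderiv ℝ ψ (j y)).comp (fderiv ℝ j y) :=
            fderiv_comp y (h2.differentiableAt (by simp)) (h1.differentiableAt (by simp))
          rw [h5, ContinuousLinearMap.comp_apply, ContinuousLinearMap.comp_apply, h3,
            ← pullForm_apply, h4]
          rfl
        · filter_upwards [hiso, hslice.eventually_nhds, hinW.eventually hzsm]
            with w h1 h2 h3 a b
          have h4 : HasFDerivAt (fun w : W => (ψ ∘ j) (0, w))
              ((fderiv ℝ (ψ ∘ j) (0, w)).comp (ContinuousLinearMap.inr ℝ ℝ W)) w :=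
            HasFDerivAt.comp w (g := ψ ∘ j)
              (h3.differentiableAt (by simp)).hasFDerivAt
              (ContinuousLinearMap.inr ℝ ℝ W).hasFDerivAt
          have h5 : (fun w : W => (ψ ∘ j) (0, w)) =ᶠ[𝓝 w] (fun p : l.ker => ψ p) ∘ j' := by
            filter_upwards [h2] with w' hw'
            simp only [Function.comp_apply, hw']
          have h6 : fderiv ℝ ((fun p : l.ker => ψ p) ∘ j') w =
              (fderiv ℝ (ψ ∘ j) (0, w)).comp (ContinuousLinearMap.inr ℝ ℝ W) :=
            (h4.congr_of_eventuallyEq h5.symm).fderiv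
          have := h1 a b
          rw [h6] at this
          exact this

/-! ### Symplectic linear algebra -/

/-- The standard symplectic form as a bilinear form. -/
def omegaB (n : ℕ) : LinearMap.BilinForm ℝ (E n) :=
  LinearMap.mk₂ ℝ (omega0 n)
    (fun a b c => by
      simp only [omega0, Prod.fst_add, Prod.snd_add, Pi.add_apply, add_mul, Finset.sum_add_distrib]
      ring)
    (fun r a c => by
      simp only [omega0, Prod.smul_fst, Prod.smul_snd, Pi.smul_apply, smul_eq_mul, mul_assoc,
        ← Finset.mul_sum]
      ring)
    (fun a b c => by
      simp only [omega0, Prod.fst_add, Prod.snd_add, Pi.add_apply, mul_add, Finset.sum_add_distrib]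
      ring)
    (fun r a c => by
      simp only [omega0, Prod.smul_fst, Prod.smul_snd, Pi.smul_apply, smul_eq_mul,
        mul_left_comm _ r, ← Finset.mul_sum]
      ring)

/-- The standard symplectic form as a continuous bilinear map. -/
def omegaL (n : ℕ) : E n →L[ℝ] E n →L[ℝ] ℝ := LinearMap.toContinuousBilinearMap (omegaB n)

theorem omegaB_apply (n : ℕ) (u v : E n) : omegaB n u v = omega0 n u v := rfl

theorem omegaL_apply (n : ℕ) (u v : E n) : omegaL n u v = omega0 n u v := rfl

theorem omega0_self (n : ℕ) (u : E n) : omega0 n u u = 0 := by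
  simp [omega0, mul_comm]

theorem omega0_swap (n : ℕ) (u v : E n) : omega0 n u v = - omega0 n v u := by
  simp only [omega0, neg_sub]
  congr 1 <;> exact Finset.sum_congr rfl fun i _ => mul_comm _ _

theorem omegaB_nondegenerate (n : ℕ) : (omegaB n).Nondegenerate := by
  have hleft : ∀ u : E n, (∀ v, omega0 n u v = 0) → u = 0 := by
    intro u hu
    ext i
    · simpa [omega0, Pi.single_apply] using hu (0, Pi.single i 1)
    · simpa [omega0, Pi.single_apply] using hu (Pi.single i 1, 0)
  refine ⟨hleft, fun u hu => hleft u fun v => ?_⟩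
  rw [omega0_swap]
  exact neg_eq_zero.2 (hu v)

theorem finrank_E (n : ℕ) : Module.finrank ℝ (E n) = n + n := by
  simp [Module.finrank_prod]

theorem symplOrth_coe (n : ℕ) (T : Submodule ℝ (E n)) :
    symplOrth n (T : Set (E n)) = ((omegaB n).orthogonal T : Set (E n)) := by
  ext v
  rw [SetLike.mem_coe, LinearMap.BilinForm.mem_orthogonal_iff]
  refine forall₂_congr fun u _ => ?_
  rw [omegaB_apply, omega0_swap, neg_eq_zero]

theorem finrank_orthogonal_add (n : ℕ) (T : Submodule ℝ (E n)) :
    Module.finrank ℝ ((omegaB n).orthogonal T) + Module.finrank ℝ T = n + n := by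
  have h1 := LinearMap.BilinForm.finrank_orthogonal (omegaB_nondegenerate n) T
  have h2 := Submodule.finrank_le T
  rw [finrank_E] at h1 h2
  omega

/-- An isotropic subspace of half the dimension equals its symplectic orthogonal. -/
theorem symplOrth_eq_self (n : ℕ) (T : Submodule ℝ (E n)) (hT : Module.finrank ℝ T = n)
    (hiso : ∀ u ∈ T, ∀ v ∈ T, omega0 n u v = 0) :
    symplOrth n (T : Set (E n)) = T := by
  have hle : T ≤ (omegaB n).orthogonal T := fun v hv =>
    LinearMap.BilinForm.mem_orthogonal_iff.2 fun u hu => hiso u hu v hv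
  have h1 := finrank_orthogonal_add n T
  rw [symplOrth_coe, ← Submodule.eq_of_le_of_finrank_eq hle (by omega)]

/-- The coordinate subspace `ℝᵏ × {0}` as a linear subspace. -/
def coordSub (n k : ℕ) : Submodule ℝ (E n) where
  carrier := coordSubspace n k
  add_mem' := by
    rintro a b ⟨ha, ha'⟩ ⟨hb, hb'⟩
    exact ⟨fun i hi => by simp [ha i hi, hb i hi], fun i hi => by simp [ha' i hi, hb' i hi]⟩
  zero_mem' := ⟨fun _ _ => rfl, fun _ _ => rfl⟩
  smul_mem' := by
    rintro c a ⟨ha, ha'⟩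
    exact ⟨fun i hi => by simp [ha i hi], fun i hi => by simp [ha' i hi]⟩

theorem coe_coordSub (n k : ℕ) : (coordSub n k : Set (E n)) = coordSubspace n k := rfl

theorem mem_coordSubspace_half {n : ℕ} {z : E n} : z ∈ coordSubspace n n ↔ z.2 = 0 := by
  constructor
  · rintro ⟨-, h⟩
    ext i
    exact h i (by omega)
  · intro h
    exact ⟨fun i hi => absurd i.2 (by omega), fun i _ => by rw [h]; rfl⟩

/-! ### Tangent spaces and local parametrizations -/

/-- In a submanifold chart `Φ` with inverse `g`, the tangent space (velocities of curves) at `q` is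
the image under `Dg` of the coordinate subspace. The differential of `g` is injective there. -/
theorem tangentSet_chart {n k : ℕ} {N V : Set (E n)} {Φ g : E n → E n} (hV : IsOpen V)
    (hΦV : IsOpen (Φ '' V)) (hΦ : ContDiffOn ℝ (⊤ : ℕ∞) Φ V)
    (hg : ContDiffOn ℝ (⊤ : ℕ∞) g (Φ '' V)) (hgΦ : ∀ z ∈ V, g (Φ z) = z)
    (hN : Φ '' (N ∩ V) = coordSubspace n k ∩ Φ '' V) {q : E n} (hqN : q ∈ N) (hqV : q ∈ V) :
    TangentSet n N q = fderiv ℝ g (Φ q) '' coordSubspace n k ∧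
      Function.Injective (fderiv ℝ g (Φ q)) := by
  have hΦq : Φ q ∈ Φ '' V := Set.mem_image_of_mem _ hqV
  have hΦd : HasFDerivAt Φ (fderiv ℝ Φ q) q :=
    ((hΦ.contDiffAt (hV.mem_nhds hqV)).differentiableAt (by simp)).hasFDerivAt
  have hgd : HasFDerivAt g (fderiv ℝ g (Φ q)) (Φ q) :=
    ((hg.contDiffAt (hΦV.mem_nhds hΦq)).differentiableAt (by simp)).hasFDerivAt
  have hgΦd : (fderiv ℝ g (Φ q)).comp (fderiv ℝ Φ q) = ContinuousLinearMap.id ℝ (E n) := by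
    refine (hgd.comp q hΦd).unique ((hasFDerivAt_id q).congr_of_eventuallyEq ?_)
    filter_upwards [hV.mem_nhds hqV] with z hz
    exact hgΦ z hz
  have hΦgd : (fderiv ℝ Φ q).comp (fderiv ℝ g (Φ q)) = ContinuousLinearMap.id ℝ (E n) := by
    have hΦd' : HasFDerivAt Φ (fderiv ℝ Φ q) (g (Φ q)) := by rwa [hgΦ q hqV]
    refine (hΦd'.comp (Φ q) hgd).unique ((hasFDerivAt_id (Φ q)).congr_of_eventuallyEq ?_)
    filter_upwards [hΦV.mem_nhds hΦq] with z hz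
    obtain ⟨x, hx, rfl⟩ := hz
    simp [hgΦ x hx]
  have hΦqC : Φ q ∈ coordSub n k := by
    have : Φ q ∈ coordSubspace n k ∩ Φ '' V := hN ▸ Set.mem_image_of_mem _ ⟨hqN, hqV⟩
    exact this.1
  refine ⟨Set.Subset.antisymm ?_ ?_, ?_⟩
  · rintro v ⟨γ, hγ0, hγN, hγ⟩
    refine ⟨fderiv ℝ Φ q v, ?_, congrArg (fun L => L v) hgΦd⟩
    have hd : HasDerivAt (fun t => Φ (γ t)) (fderiv ℝ Φ q v) 0 := by
      have hΦd' : HasFDerivAt Φ (fderiv ℝ Φ q) (γ 0) := by rwa [hγ0]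
      exact hΦd'.comp_hasDerivAt 0 hγ
    have hmem : ∀ᶠ t in 𝓝 (0 : ℝ), Φ (γ t) ∈ coordSub n k := by
      have hVγ : ∀ᶠ t in 𝓝 (0 : ℝ), γ t ∈ V :=
        hγ.continuousAt.eventually (hV.mem_nhds (by rwa [hγ0]))
      filter_upwards [hγN, hVγ] with t h1 h2
      have : Φ (γ t) ∈ coordSubspace n k ∩ Φ '' V := hN ▸ Set.mem_image_of_mem _ ⟨h1, h2⟩
      exact this.1
    -- the difference quotients lie in the closed subspace, hence so does the derivative
    have hcl : IsClosed (coordSub n k : Set (E n)) := Submodule.closed_of_finiteDimensional _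
    refine hcl.mem_of_tendsto (hasDerivAt_iff_tendsto_slope.1 hd) ?_
    filter_upwards [nhdsWithin_le_nhds hmem] with t ht
    rw [slope_def_module]
    exact Submodule.smul_mem _ _ (Submodule.sub_mem _ ht (by rw [hγ0]; exact hΦqC))
  · rintro _ ⟨c, hc, rfl⟩
    have hline : HasDerivAt (fun t : ℝ => Φ q + t • c) c 0 := by
      simpa using ((hasDerivAt_id (0 : ℝ)).smul_const c).const_add (Φ q)
    refine ⟨fun t => g (Φ q + t • c), by simp [hgΦ q hqV], ?_, ?_⟩
    · have hev : ∀ᶠ t in 𝓝 (0 : ℝ), Φ q + t • c ∈ Φ '' V :=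
        hline.continuousAt.eventually (hΦV.mem_nhds (by simpa using hΦq))
      filter_upwards [hev] with t ht
      have h1 : Φ q + t • c ∈ coordSubspace n k :=
        (coordSub n k).add_mem hΦqC ((coordSub n k).smul_mem t hc)
      have h2 : Φ q + t • c ∈ Φ '' (N ∩ V) := hN ▸ ⟨h1, ht⟩
      obtain ⟨z, hz, hz'⟩ := h2
      rw [← hz', hgΦ z hz.2]
      exact hz.1
    · have hgd' : HasFDerivAt g (fderiv ℝ g (Φ q)) (Φ q + (0 : ℝ) • c) := by simpa using hgd
      exact hgd'.comp_hasDerivAt 0 hline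
  · intro u v huv
    have h1 := congrArg (fun L => L u) hΦgd
    have h2 := congrArg (fun L => L v) hΦgd
    simp only [ContinuousLinearMap.comp_apply, ContinuousLinearMap.id_apply] at h1 h2
    rw [← h1, ← h2, huv]

/-- Near a point `p`, a submanifold is parametrized by a linear space, with injective
differentials whose ranges are the tangent spaces. -/
theorem exists_local_parametrization {n k : ℕ} {N : Set (E n)} (hN : IsSubmanifold n k N)
    {p : E n} (hp : p ∈ N) :
    ∃ ψ : coordSub n k → E n, ψ 0 = p ∧ ∀ᶠ c in 𝓝 0, ContDiffAt ℝ ∞ ψ c ∧ ψ c ∈ N ∧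
      Function.Injective (fderiv ℝ ψ c) ∧
      TangentSet n N (ψ c) = ((fderiv ℝ ψ c : coordSub n k →ₗ[ℝ] E n).range : Set (E n)) := by
  obtain ⟨V, Φ, hV, hpV, hΦV, -, hΦ, ⟨g, hg, hgΦ⟩, hNV⟩ := hN p hp
  have hΦp : Φ p ∈ coordSub n k := by
    have : Φ p ∈ coordSubspace n k ∩ Φ '' V := hNV ▸ Set.mem_image_of_mem _ ⟨hp, hpV⟩
    exact this.1
  refine ⟨fun c => g (Φ p + c), by simp [hgΦ p hpV], ?_⟩
  have hcont : Continuous (fun c : coordSub n k => Φ p + (c : E n)) := by fun_prop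
  have hev : ∀ᶠ c : coordSub n k in 𝓝 0, Φ p + (c : E n) ∈ Φ '' V :=
    (hcont.tendsto' 0 (Φ p) (by simp)).eventually
      (hΦV.mem_nhds (Set.mem_image_of_mem Φ hpV))
  filter_upwards [hev] with c hc
  have hcC : Φ p + (c : E n) ∈ coordSubspace n k := (coordSub n k).add_mem hΦp c.2
  have hq : Φ p + (c : E n) ∈ Φ '' (N ∩ V) := hNV ▸ ⟨hcC, hc⟩
  obtain ⟨q, ⟨hqN, hqV⟩, hqc⟩ := hq
  have hgc : ContDiffAt ℝ ∞ g (Φ p + c) := hg.contDiffAt (hΦV.mem_nhds hc)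
  have htrans : HasFDerivAt (fun c : coordSub n k => Φ p + (c : E n)) (coordSub n k).subtypeL c :=
    (coordSub n k).subtypeL.hasFDerivAt.const_add (Φ p)
  have hder : HasFDerivAt (fun c : coordSub n k => g (Φ p + c))
      ((fderiv ℝ g (Φ p + c)).comp (coordSub n k).subtypeL) c :=
    (hgc.differentiableAt (by simp)).hasFDerivAt.comp c htrans
  obtain ⟨htan, hinj⟩ := tangentSet_chart hV hΦV hΦ hg hgΦ hNV hqN hqV
  rw [hqc] at htan hinj
  have hgq : g (Φ p + c) = q := by rw [← hqc, hgΦ q hqV]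
  refine ⟨?_, ?_, ?_, ?_⟩
  · exact hgc.comp c (contDiffAt_const.add (coordSub n k).subtypeL.contDiff.contDiffAt)
  · rw [hgq]; exact hqN
  · rw [hder.fderiv]
    exact hinj.comp Subtype.val_injective
  · rw [hder.fderiv, hgq, htan]
    ext v
    constructor
    · rintro ⟨c', hc', rfl⟩
      exact ⟨⟨c', hc'⟩, rfl⟩
    · rintro ⟨y, rfl⟩
      exact ⟨y, y.2, rfl⟩

/-! ### Construction of the Lagrangian submanifold -/

/-- The kernel of the symplectic form restricted to a coisotropic tangent space `T` is `T^ω`, of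
dimension `2n - dim T`. -/
theorem finrank_ker_pullForm {n : ℕ} {C : Type} [NormedAddCommGroup C] [NormedSpace ℝ C]
    [FiniteDimensional ℝ C] (ψ : C → E n) (c : C) (hinj : Function.Injective (fderiv ℝ ψ c))
    (hco : symplOrth n ((fderiv ℝ ψ c : C →ₗ[ℝ] E n).range : Set (E n)) ⊆
      ((fderiv ℝ ψ c : C →ₗ[ℝ] E n).range : Set (E n))) :
    Module.finrank ℝ (pullForm (omegaL n) ψ c : C →ₗ[ℝ] C →L[ℝ] ℝ).ker + Module.finrank ℝ C =
      n + n := by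
  set D : C →ₗ[ℝ] E n := (fderiv ℝ ψ c : C →ₗ[ℝ] E n) with hD
  have hDinj : Function.Injective D := hinj
  rw [symplOrth_coe] at hco
  have hmap : ((pullForm (omegaL n) ψ c : C →ₗ[ℝ] C →L[ℝ] ℝ).ker).map D =
      (omegaB n).orthogonal D.range := by
    ext v
    rw [LinearMap.BilinForm.mem_orthogonal_iff]
    constructor
    · rintro ⟨a, ha, rfl⟩ _ ⟨b, rfl⟩
      have ha' : pullForm (omegaL n) ψ c a = 0 := ha
      have : pullForm (omegaL n) ψ c a b = 0 := by rw [ha']; rfl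
      rw [omegaB_apply, omega0_swap, neg_eq_zero]
      exact this
    · intro h
      obtain ⟨a, rfl⟩ := hco (LinearMap.BilinForm.mem_orthogonal_iff.2 h)
      refine ⟨a, ?_, rfl⟩
      change pullForm (omegaL n) ψ c a = 0
      ext b
      have := h (D b) ⟨b, rfl⟩
      rw [omegaB_apply, omega0_swap, neg_eq_zero] at this
      exact this
  have h1 := (Submodule.equivMapOfInjective D hDinj
    (pullForm (omegaL n) ψ c : C →ₗ[ℝ] C →L[ℝ] ℝ).ker).finrank_eq
  rw [hmap] at h1
  have h2 := finrank_orthogonal_add n D.range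
  rw [LinearMap.finrank_range_of_inj hDinj] at h2
  omega

/-- The image of a small neighbourhood of `0` under an isotropic immersion of `ℝⁿ` is a Lagrangian
submanifold. -/
theorem exists_lagrangian_of_immersion {n : ℕ} {N : Set (E n)} (J : (Fin n → ℝ) → E n)
    (hJ : ∀ᶠ x in 𝓝 0, ContDiffAt ℝ ∞ J x) (hinj : Function.Injective (fderiv ℝ J 0))
    (hN : ∀ᶠ x in 𝓝 0, J x ∈ N)
    (hiso : ∀ᶠ x in 𝓝 0, ∀ a b, omega0 n (fderiv ℝ J x a) (fderiv ℝ J x b) = 0) :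
    ∃ L : Set (E n), IsSubmanifold n n L ∧ IsLagrangian n L ∧ J 0 ∈ L ∧ L ⊆ N := by
  -- straighten the image by adding a linear complement `Q` of the tangent space at `J 0`
  let D : (Fin n → ℝ) →ₗ[ℝ] E n := (fderiv ℝ J 0 : (Fin n → ℝ) →ₗ[ℝ] E n)
  have hDinj : Function.Injective D := hinj
  have hDrange : Module.finrank ℝ D.range = n := by
    rw [LinearMap.finrank_range_of_inj hDinj]; simp
  obtain ⟨Q, hQ⟩ := Submodule.exists_isCompl D.range
  have hQn : Module.finrank ℝ (Fin n → ℝ) = Module.finrank ℝ Q := by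
    have := Submodule.finrank_add_eq_of_isCompl hQ
    rw [hDrange, finrank_E] at this
    simp
    omega
  let eQ : (Fin n → ℝ) ≃ₗ[ℝ] Q := LinearEquiv.ofFinrankEq _ _ hQn
  let f' : E n ≃L[ℝ] E n :=
    (((LinearEquiv.ofInjective D hDinj).prodCongr eQ).trans
      (Submodule.prodEquivOfIsCompl _ _ hQ)).toContinuousLinearEquiv
  let A : (Fin n → ℝ) →L[ℝ] E n := (Q.subtype ∘ₗ eQ.toLinearMap).toContinuousLinearMap
  let G : E n → E n := fun z => J z.1 + A z.2
  have hGd : ∀ z : E n, ContDiffAt ℝ ∞ J z.1 → HasFDerivAt G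
      ((fderiv ℝ J z.1).comp (ContinuousLinearMap.fst ℝ _ _) +
        A.comp (ContinuousLinearMap.snd ℝ _ _)) z := by
    intro z hz
    exact ((hz.differentiableAt (by simp)).hasFDerivAt.comp z hasFDerivAt_fst).add
      (A.hasFDerivAt.comp z hasFDerivAt_snd)
  have hfst : Filter.Tendsto (fun z : E n => z.1) (𝓝 0) (𝓝 0) :=
    continuous_fst.tendsto' _ _ rfl
  have hGsm : ∀ᶠ z in 𝓝 (0 : E n), ContDiffAt ℝ ∞ G z := by
    filter_upwards [hfst.eventually hJ] with z hz
    exact (hz.comp z contDiffAt_fst).add (A.contDiff.contDiffAt.comp z contDiffAt_snd)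
  have hf' : HasFDerivAt G (f' : E n →L[ℝ] E n) 0 := by
    refine (hGd 0 hJ.self_of_nhds).congr_fderiv ?_
    refine ContinuousLinearMap.ext fun z => ?_
    change fderiv ℝ J 0 z.1 + A z.2 = f' z
    simp only [f', A, LinearEquiv.coe_toContinuousLinearEquiv', LinearEquiv.trans_apply,
      LinearEquiv.prodCongr_apply, Submodule.coe_prodEquivOfIsCompl']
    rfl
  have hS : {z : E n | ContDiffAt ℝ ∞ J z.1 ∧ J z.1 ∈ N ∧
      ∀ a b, omega0 n (fderiv ℝ J z.1 a) (fderiv ℝ J z.1 b) = 0} ∈ 𝓝 (0 : E n) :=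
    hfst.eventually (hJ.and (hN.and hiso))
  obtain ⟨e, heG, h0, heS, hesm, hesymm⟩ := smooth_inverse hGsm hf' hS
  have hG0 : ∀ z : E n, z.2 = 0 → G z = J z.1 := by
    intro z hz
    simp [G, hz]
  let L : Set (E n) := e '' (e.source ∩ coordSubspace n n)
  have hVimg : e.symm '' e.target = e.source := e.symm.image_source_eq_target
  have hLt : L ⊆ e.target := by
    rintro _ ⟨z, hz, rfl⟩
    exact e.map_source hz.1
  have hLimg : e.symm '' (L ∩ e.target) = coordSubspace n n ∩ e.symm '' e.target := by
    rw [hVimg, Set.inter_eq_left.2 hLt]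
    ext z
    constructor
    · rintro ⟨_, ⟨z, hz, rfl⟩, rfl⟩
      rw [e.left_inv hz.1]
      exact ⟨hz.2, hz.1⟩
    · rintro ⟨h1, h2⟩
      exact ⟨e z, ⟨z, ⟨h2, h1⟩, rfl⟩, e.left_inv h2⟩
  have hsymmOn : ContDiffOn ℝ (⊤ : ℕ∞) e.symm e.target := fun y hy =>
    (hesymm y hy).contDiffWithinAt
  have hGOn : ContDiffOn ℝ (⊤ : ℕ∞) G (e.symm '' e.target) := by
    rw [hVimg]
    exact fun z hz => (hesm z hz).contDiffWithinAt
  have hopen : IsOpen (e.symm '' e.target) := by rw [hVimg]; exact e.open_source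
  have hright : ∀ y ∈ e.target, G (e.symm y) = y := by
    intro y hy
    rw [← heG]
    exact e.right_inv hy
  refine ⟨L, ?_, ?_, ?_, ?_⟩
  · intro q hq
    exact ⟨e.target, e.symm, e.open_target, hLt hq, hopen, e.symm.injOn, hsymmOn,
      ⟨G, hGOn, hright⟩, hLimg⟩
  · intro q hq
    obtain ⟨htan, hGinj⟩ :=
      tangentSet_chart e.open_target hopen hsymmOn hGOn hright hLimg hq (hLt hq)
    obtain ⟨z, ⟨hz, hzC⟩, rfl⟩ := hq
    rw [e.left_inv hz] at htan hGinj
    obtain ⟨hJz, -, hisoz⟩ := heS hz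
    have hDG : ∀ a : Fin n → ℝ, fderiv ℝ G z (a, 0) = fderiv ℝ J z.1 a := by
      intro a
      rw [(hGd z hJz).fderiv]
      simp
    have htan' : TangentSet n L (e z) =
        ((fderiv ℝ J z.1 : (Fin n → ℝ) →ₗ[ℝ] E n).range : Set (E n)) := by
      rw [htan]
      ext v
      constructor
      · rintro ⟨⟨a, b⟩, hab, rfl⟩
        obtain rfl : b = 0 := mem_coordSubspace_half.1 hab
        exact ⟨a, (hDG a).symm⟩
      · rintro ⟨a, rfl⟩
        exact ⟨(a, 0), mem_coordSubspace_half.2 rfl, hDG a⟩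
    have hJinj : Function.Injective (fderiv ℝ J z.1 : (Fin n → ℝ) →ₗ[ℝ] E n) := by
      intro a b hab
      have hab' : fderiv ℝ J z.1 a = fderiv ℝ J z.1 b := hab
      rw [← hDG, ← hDG] at hab'
      exact congrArg Prod.fst (hGinj hab')
    rw [htan']
    refine symplOrth_eq_self n _ ?_ ?_
    · rw [LinearMap.finrank_range_of_inj hJinj]; simp
    · rintro _ ⟨a, rfl⟩ _ ⟨b, rfl⟩
      exact hisoz a b
  · refine ⟨0, ⟨h0, mem_coordSubspace_half.2 rfl⟩, ?_⟩
    rw [heG]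
    exact hG0 0 rfl
  · rintro _ ⟨z, ⟨hz, hzC⟩, rfl⟩
    rw [heG, hG0 z (mem_coordSubspace_half.1 hzC)]
    exact (heS hz).2.1

/-- through every point of a coisotropic submanifold there passes a
Lagrangian submanifold contained in it. -/
theorem exists_lagrangian_through_point_of_coisotropic
    (n : ℕ) (hn : 1 ≤ n) (k : ℕ) (N : Set (E n)) (hN : IsSubmanifold n k N)
    (hco : IsCoisotropic n N) (p : E n) (hp : p ∈ N) :
    ∃ L : Set (E n), IsSubmanifold n n L ∧ IsLagrangian n L ∧ p ∈ L ∧ L ⊆ N := by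
  obtain ⟨ψ, hψ0, hψ⟩ := exists_local_parametrization hN hp
  have hrank : ∀ᶠ c in 𝓝 (0 : coordSub n k),
      Module.finrank ℝ
          (pullForm (omegaL n) ψ c : coordSub n k →ₗ[ℝ] coordSub n k →L[ℝ] ℝ).ker +
        Module.finrank ℝ (coordSub n k) = n + n := by
    filter_upwards [hψ] with c ⟨_, hcN, hinj, htan⟩
    refine finrank_ker_pullForm ψ c hinj ?_
    rw [← htan]
    exact hco _ hcN
  obtain ⟨W, _, _, _, j, hdim, hj0, hj, hjinj, hiso⟩ :=
    exists_isotropic_immersion (omegaL n) (omega0_self n) _ (coordSub n k) rfl ψ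
      (hψ.mono fun c hc => hc.1) (n + n - Module.finrank ℝ (coordSub n k))
      (hrank.mono fun c hc => by omega)
  have hWn : Module.finrank ℝ (Fin n → ℝ) = Module.finrank ℝ W := by
    have := hrank.self_of_nhds
    simp only [Module.finrank_fintype_fun_eq_card, Fintype.card_fin]
    omega
  let e : (Fin n → ℝ) ≃L[ℝ] W := ContinuousLinearEquiv.ofFinrankEq hWn
  have he : Filter.Tendsto e (𝓝 0) (𝓝 0) := e.continuous.tendsto' _ _ (map_zero e)
  have hjt : Filter.Tendsto j (𝓝 0) (𝓝 0) := by
    have := hj.self_of_nhds.continuousAt.tendsto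
    rwa [hj0] at this
  have hsm : ∀ᶠ w in 𝓝 (0 : W), ContDiffAt ℝ ∞ (ψ ∘ j) w := by
    filter_upwards [hj, hjt.eventually hψ] with w h1 h2
    exact h2.1.comp w h1
  have hder : ∀ᶠ x in 𝓝 (0 : Fin n → ℝ), fderiv ℝ ((ψ ∘ j) ∘ e) x =
      (fderiv ℝ (ψ ∘ j) (e x)).comp (e : (Fin n → ℝ) →L[ℝ] W) := by
    filter_upwards [he.eventually hsm] with x hx
    exact ((hx.differentiableAt (by simp)).hasFDerivAt.comp x e.hasFDerivAt).fderiv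
  have hJ0 : ((ψ ∘ j) ∘ e) 0 = p := by simp [hj0, hψ0]
  have hmain := exists_lagrangian_of_immersion (N := N) ((ψ ∘ j) ∘ e) ?_ ?_ ?_ ?_
  · rwa [hJ0] at hmain
  · filter_upwards [he.eventually hsm] with x hx
    exact hx.comp x e.contDiff.contDiffAt
  · have hψ0' := hψ.self_of_nhds
    have hcomp : fderiv ℝ (ψ ∘ j) 0 = (fderiv ℝ ψ 0).comp (fderiv ℝ j 0) := by
      have := fderiv_comp (0 : W) (g := ψ) (f := j)
        (by rw [hj0]; exact hψ0'.1.differentiableAt (by simp))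
        (hj.self_of_nhds.differentiableAt (by simp))
      rwa [hj0] at this
    rw [hder.self_of_nhds, map_zero, hcomp]
    exact (hψ0'.2.2.1.comp hjinj).comp e.injective
  · filter_upwards [(hjt.comp he).eventually hψ] with x hx
    exact hx.2.1
  · filter_upwards [he.eventually hiso, hder] with x hx hdx a b
    rw [hdx]
    exact hx (e a) (e b)
end
end

section
/- Let N ⊆ E be a closed subset. Then the rigid locus R_N is equal to the set of all points p ∈ N that are rigid with respect to N in E. (Characterization of the rigid locus via displacement energy.) -/
/-!
Why the rigid locus is the set of rigid points.

`Ham(E)` is a group on which the Hofer norm is invariant under inversion and subadditive: inverses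
come from time reversal (`HamLt.inv`), products from concatenation (`HamLt.comp`).

*Rigid points lie in `R_N`* (`mem_of_rigid`). Suppose `φ ∈ Σ̄_N` moves `p` off `N`. As `N` is closed,
`φ` moves a neighbourhood of `p` off `N`, and then so does `ψ⁻¹ φ` for each `ψ ∈ Σ_N`. These maps have
arbitrarily small Hofer norm, so `p` is not rigid.

*Non-rigid points do not lie in `R_N`* (`exists_sigmaBar_of_not_rigid`). Let `U` be a neighbourhood of
`p` that is displaced from `N` by maps `φ` of arbitrarily small Hofer norm.

* If `p` is not interior to `N`, some `f` supported in `U` moves `p` off `N`. The conjugate `φ f φ⁻¹`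
  is supported in `φ(U)`, hence fixes `N` pointwise, and its Hofer distance to `f` is at most `2‖φ‖`.
  So `f ∈ Σ̄_N` (`mem_sigmaBar_of_supported`).
* If `p` is interior to `N`, a ball in `U ∩ N` is displaced from itself by each `φ`. The argument of
  Eliashberg and Polterovich shows that a commutator `[g, f]` of maps supported in this ball equals
  `[g, [f, φ]]`, so its Hofer norm is at most `4‖φ‖` (`commutator_hamLt`), that is, zero. Maps of norm
  zero lie in `Σ̄_N` and form a class closed under conjugation; a suitable conjugate of a nontrivial
  one moves `p` off `N` (`exists_sigmaBar_of_zero`). The nondegeneracy of the Hofer norm, by which this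
  case is in fact void, is not needed.

All maps `f`, `g` and all conjugating maps are taken to be twists: rotations of `E = ℂⁿ` about a point
by an angle depending smoothly on the distance to that point (`exists_twist`). These are explicit
smooth symplectic maps, which gives the conjugation invariance that is needed (`HamLt.conj`) without
appeal to the smooth dependence of general Hamiltonian flows on initial conditions.
-/

open scoped ENNReal Topology

noncomputable section

open scoped Topology

/-! ### Hamiltonian vector fields -/

lemma XH_eq_of_omega0 {n : ℕ} {H : ℝ × E n → ℝ} {t : ℝ} {z X : E n}
    (h : ∀ v, omega0 n X v = fderiv ℝ (fun w => H (t, w)) z v) : XH n H t z = X := by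
  refine Prod.ext ?_ ?_ <;> funext i
  · simp [XH, ← h, omega0, Pi.single_apply]
  · simp [XH, ← h, omega0, Pi.single_apply]

lemma omega0_XH {n : ℕ} (H : ℝ × E n → ℝ) (t : ℝ) (z v : E n) :
    omega0 n (XH n H t z) v = fderiv ℝ (fun w => H (t, w)) z v := by
  have hv : v = ∑ i, (v.1 i • ((Pi.single i 1, 0) : E n) + v.2 i • ((0, Pi.single i 1) : E n)) := by
    refine Prod.ext ?_ ?_ <;> funext j
    · simp [Prod.fst_sum, Finset.sum_apply, Pi.single_apply]
    · simp [Prod.snd_sum, Finset.sum_apply, Pi.single_apply]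
  conv_rhs => rw [hv]
  simp only [map_sum, map_add, map_smul, smul_eq_mul, omega0, XH, ← Finset.sum_sub_distrib]
  exact Finset.sum_congr rfl fun i _ => by ring

/-- A slice of `G` that is a constant multiple of a slice of `H` has the corresponding multiple of
the Hamiltonian vector field. -/
lemma XH_slice {n : ℕ} {G H : ℝ × E n → ℝ} {t s c : ℝ} (h : ∀ w, G (t, w) = c * H (s, w))
    (hH : ContDiff ℝ (⊤ : ℕ∞) H) (z : E n) : XH n G t z = c • XH n H s z := by
  have hd : DifferentiableAt ℝ (fun w => H (s, w)) z := by
    have : ContDiff ℝ (⊤ : ℕ∞) (fun w => H (s, w)) := by fun_prop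
    exact this.differentiable (by simp) z
  have : fderiv ℝ (fun w => G (t, w)) z = c • fderiv ℝ (fun w => H (s, w)) z := by
    simp only [h]
    exact fderiv_const_mul hd c
  refine Prod.ext ?_ ?_ <;> funext i <;> simp [XH, this]

/-- The Hamiltonian vector field of a smooth compactly supported `H`, as a function on
`ℝ × E`, is smooth with compact support. -/
lemma XH_smooth {n : ℕ} {H : ℝ × E n → ℝ} (hH : AdmissibleH n Set.univ H) :
    ContDiff ℝ (⊤ : ℕ∞) (fun p : ℝ × E n => XH n H p.1 p.2) ∧
      HasCompactSupport (fun p : ℝ × E n => XH n H p.1 p.2) := by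
  have key : ∀ p : ℝ × E n, ∀ v, fderiv ℝ (fun w => H (p.1, w)) p.2 v = fderiv ℝ H p (0, v) := by
    intro p v
    have h1 : HasFDerivAt H (fderiv ℝ H p) (p.1, p.2) :=
      (hH.1.differentiable (by simp) p).hasFDerivAt
    have h2 := h1.comp p.2 (hasFDerivAt_prodMk_right p.1 p.2)
    have h3 : fderiv ℝ (fun w => H (p.1, w)) p.2 = _ := h2.fderiv
    rw [h3]; simp
  have hX : (fun p : ℝ × E n => XH n H p.1 p.2) = fun p =>
      ((fun i => fderiv ℝ H p (0, (0, Pi.single i 1))),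
       (fun i => -fderiv ℝ H p (0, (Pi.single i 1, 0)))) := by
    funext p; simp only [XH, key]
  rw [hX]
  have hf : ContDiff ℝ (⊤ : ℕ∞) (fderiv ℝ H) := hH.1.fderiv_right (by simp)
  constructor
  · refine ContDiff.prodMk ?_ ?_
    · exact contDiff_pi.2 fun i => hf.clm_apply contDiff_const
    · exact contDiff_pi.2 fun i => (hf.clm_apply contDiff_const).neg
  · have hc : HasCompactSupport (fderiv ℝ H) := HasCompactSupport.fderiv ℝ hH.2.1
    refine hc.mono fun p hp => ?_
    contrapose! hp
    simp only [Function.mem_support, ne_eq, not_not] at hp ⊢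
    rw [hp]; refine Prod.ext ?_ ?_ <;> funext i <;> simp

lemma XH_lipschitz {n : ℕ} {H : ℝ × E n → ℝ} (hH : AdmissibleH n Set.univ H) :
    ∃ K, ∀ t, LipschitzWith K (XH n H t) := by
  obtain ⟨K, hK⟩ := ContDiff.lipschitzWith_of_hasCompactSupport (XH_smooth hH).2
    (XH_smooth hH).1 (by simp)
  refine ⟨K, fun t => LipschitzWith.of_dist_le_mul fun x y => ?_⟩
  have := hK.dist_le_mul (t, x) (t, y)
  simpa [Prod.dist_eq] using this

/-! ### Regularity of time-one maps -/

lemma flow_continuous {n : ℕ} {H : ℝ × E n → ℝ} {Φ : ℝ → E n → E n}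
    (hH : AdmissibleH n Set.univ H) (hΦ : IsHamFlow n H Φ) : Continuous (Φ 1) := by
  obtain ⟨K, hK⟩ := XH_lipschitz hH
  have hc : ∀ z, Continuous (fun s => Φ s z) := fun z =>
    continuous_iff_continuousAt.2 fun t => (hΦ.2 z t).continuousAt
  have : ∀ x y, dist (Φ 1 x) (Φ 1 y) ≤ (⟨Real.exp K, (Real.exp_pos _).le⟩ : NNReal) * dist x y := by
    intro x y
    have := dist_le_of_trajectories_ODE (v := XH n H) (a := 0) (b := 1) (δ := dist x y) hK
      (hc x).continuousOn
      (fun t _ => (hΦ.2 x t).hasDerivWithinAt) (hc y).continuousOn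
      (fun t _ => (hΦ.2 y t).hasDerivWithinAt) (by simp [hΦ.1]) 1 (by simp)
    simpa [mul_comm] using this
  exact (LipschitzWith.of_dist_le_mul this).continuous

lemma flow_bijective {n : ℕ} {H : ℝ × E n → ℝ} {Φ : ℝ → E n → E n}
    (hH : AdmissibleH n Set.univ H) (hΦ : IsHamFlow n H Φ) : Function.Bijective (Φ 1) := by
  obtain ⟨K, hK⟩ := XH_lipschitz hH
  have hc : ∀ z, Continuous (fun s => Φ s z) := fun z =>
    continuous_iff_continuousAt.2 fun t => (hΦ.2 z t).continuousAt
  constructor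
  · intro x y hxy
    have : (fun s => Φ s x) = fun s => Φ s y :=
      ODE_solution_unique_univ (v := XH n H) (s := fun _ => Set.univ) (t₀ := 1)
        (fun t => (hK t).lipschitzOnWith) (fun t => ⟨hΦ.2 x t, trivial⟩)
        (fun t => ⟨hΦ.2 y t, trivial⟩) hxy
    simpa [hΦ.1] using congrFun this 0
  · intro w
    obtain ⟨C, hC⟩ := (XH_smooth hH).1.continuous.bounded_above_of_compact_support (XH_smooth hH).2
    -- The field is bounded on all of `E`, so Picard–Lindelöf on a ball of radius equal to the bound
    -- gives a backward solution over the whole unit time interval.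
    have hPL : IsPicardLindelof (XH n H) (tmin := 0) (tmax := 1) ⟨1, by simp⟩ w
        C.toNNReal 0 C.toNNReal K :=
      { lipschitzOnWith := fun t _ => (hK t).lipschitzOnWith
        continuousOn := fun x _ =>
          ((XH_smooth hH).1.continuous.comp (by fun_prop : Continuous fun t : ℝ => (t, x))).continuousOn
        norm_le := fun t _ x _ => (hC (t, x)).trans (Real.le_coe_toNNReal C)
        mul_max_le := by simp }
    obtain ⟨γ, hγ1, hγ⟩ := hPL.exists_eq_forall_mem_Icc_hasDerivWithinAt₀
    refine ⟨γ 0, ?_⟩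
    have := ODE_solution_unique (v := XH n H) (a := 0) (b := 1) (f := fun s => Φ s (γ 0)) (g := γ) hK
      (hc _).continuousOn (fun t _ => (hΦ.2 _ t).hasDerivWithinAt)
      (fun t ht => (hγ t ht).continuousWithinAt)
      (fun t ht => ((hγ t ⟨ht.1, ht.2.le⟩).mono (Set.Icc_subset_Icc_left ht.1)).mono_of_mem_nhdsWithin
        (Icc_mem_nhdsGE ht.2))
      (hΦ.1 _)
    rw [← hγ1]
    exact this (by simp)

/-! ### Vanishing outside the time interval -/

lemma adm_zero {n : ℕ} {H : ℝ × E n → ℝ} (hH : AdmissibleH n Set.univ H) {t : ℝ}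
    (ht : t ≤ 0 ∨ 1 ≤ t) (z : E n) : H (t, z) = 0 := by
  have hz : ∀ s, s < 0 ∨ 1 < s → H (s, z) = 0 := by
    intro s hs
    by_contra h
    have := (hH.2.2 (subset_tsupport _ h)).1
    simp only [Set.mem_Icc] at this
    rcases hs with hs | hs <;> linarith
  have hcont : Continuous fun s => H (s, z) := hH.1.continuous.comp (by fun_prop)
  have hcl : IsClosed {s | H (s, z) = 0} := isClosed_eq hcont continuous_const
  rcases ht with ht | ht
  · have : closure (Set.Iio (0 : ℝ)) ⊆ {s | H (s, z) = 0} :=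
      closure_minimal (fun s hs => hz s (.inl hs)) hcl
    rw [closure_Iio] at this
    exact this ht
  · have : closure (Set.Ioi (1 : ℝ)) ⊆ {s | H (s, z) = 0} :=
      closure_minimal (fun s hs => hz s (.inr hs)) hcl
    rw [closure_Ioi] at this
    exact this ht

lemma XH_zero {n : ℕ} {H : ℝ × E n → ℝ} (hH : AdmissibleH n Set.univ H) {t : ℝ}
    (ht : t ≤ 0 ∨ 1 ≤ t) (z : E n) : XH n H t z = 0 := by
  have := XH_slice (G := H) (H := H) (t := t) (s := t) (c := 0)
    (fun w => by simp [adm_zero hH ht]) hH.1 z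
  simpa using this

lemma flow_before {n : ℕ} {H : ℝ × E n → ℝ} {Φ : ℝ → E n → E n}
    (hH : AdmissibleH n Set.univ H) (hΦ : IsHamFlow n H Φ) {t : ℝ} (ht : t ≤ 0) (z : E n) :
    Φ t z = z := by
  have := (convex_Iic (0 : ℝ)).norm_image_sub_le_of_norm_hasDerivWithin_le (C := 0)
    (fun s _ => (hΦ.2 z s).hasDerivWithinAt)
    (fun s hs => by simp [XH_zero hH (.inl hs)]) (Set.mem_Iic.2 ht) (Set.mem_Iic.2 le_rfl)
  simp only [zero_mul, norm_le_zero_iff, sub_eq_zero, hΦ.1] at this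
  exact this.symm

lemma flow_after {n : ℕ} {H : ℝ × E n → ℝ} {Φ : ℝ → E n → E n}
    (hH : AdmissibleH n Set.univ H) (hΦ : IsHamFlow n H Φ) {t : ℝ} (ht : 1 ≤ t) (z : E n) :
    Φ t z = Φ 1 z := by
  have := (convex_Ici (1 : ℝ)).norm_image_sub_le_of_norm_hasDerivWithin_le (C := 0)
    (fun s _ => (hΦ.2 z s).hasDerivWithinAt)
    (fun s hs => by simp [XH_zero hH (.inr hs)]) (Set.mem_Ici.2 le_rfl) (Set.mem_Ici.2 ht)
  simpa only [zero_mul, norm_le_zero_iff, sub_eq_zero] using this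

/-! ### Oscillation -/

/-- The oscillation `sup H(t,·) − inf H(t,·)`, i.e. the integrand of `HNorm`. -/
def osc (n : ℕ) (H : ℝ × E n → ℝ) (t : ℝ) : ℝ :=
  sSup (Set.range fun z => H (t, z)) - sInf (Set.range fun z => H (t, z))

lemma adm_compact_image {n : ℕ} (hn : 1 ≤ n) {H : ℝ × E n → ℝ} (hH : AdmissibleH n Set.univ H) :
    ∃ C : Set (E n), IsCompact C ∧ ∀ t, (Set.range fun z => H (t, z)) = (fun z => H (t, z)) '' C := by
  have hS : IsCompact (Prod.snd '' tsupport H) := hH.2.1.image continuous_snd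
  have : Nonempty (Fin n) := ⟨⟨0, hn⟩⟩
  obtain ⟨q, hq⟩ := (Set.ne_univ_iff_exists_notMem _).1 hS.ne_univ
  have hz : ∀ z, z ∉ Prod.snd '' tsupport H → ∀ t, H (t, z) = 0 := fun z hz t => by
    by_contra h
    exact hz ⟨(t, z), subset_tsupport _ h, rfl⟩
  refine ⟨insert q (Prod.snd '' tsupport H), hS.insert q, fun t => ?_⟩
  apply Set.Subset.antisymm
  · rintro _ ⟨z, rfl⟩
    by_cases h : z ∈ Prod.snd '' tsupport H
    · exact ⟨z, Set.mem_insert_of_mem _ h, rfl⟩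
    · exact ⟨q, Set.mem_insert _ _, by simp only [hz z h, hz q hq]⟩
  · exact Set.image_subset_range _ _

lemma osc_continuous {n : ℕ} (hn : 1 ≤ n) {H : ℝ × E n → ℝ} (hH : AdmissibleH n Set.univ H) :
    Continuous (osc n H) := by
  obtain ⟨C, hC, h⟩ := adm_compact_image hn hH
  unfold osc
  simp only [h]
  exact (hC.continuous_sSup (f := fun t z => H (t, z)) hH.1.continuous).sub
    (hC.continuous_sInf (f := fun t z => H (t, z)) hH.1.continuous)

lemma osc_nonneg {n : ℕ} (hn : 1 ≤ n) {H : ℝ × E n → ℝ} (hH : AdmissibleH n Set.univ H) (t : ℝ) :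
    0 ≤ osc n H t := by
  obtain ⟨C, hC, h⟩ := adm_compact_image hn hH
  have hc : IsCompact (Set.range fun z => H (t, z)) := by
    rw [h]; exact hC.image (hH.1.continuous.comp (by fun_prop))
  exact sub_nonneg.2 (Real.sInf_le_sSup _ hc.bddBelow hc.bddAbove)

lemma HNorm_nonneg {n : ℕ} (hn : 1 ≤ n) {H : ℝ × E n → ℝ} (hH : AdmissibleH n Set.univ H) :
    0 ≤ HNorm n H :=
  intervalIntegral.integral_nonneg zero_le_one fun t _ => osc_nonneg hn hH t

lemma osc_slice {n : ℕ} {G H : ℝ × E n → ℝ} {t s c : ℝ} (h : ∀ w, G (t, w) = c * H (s, w)) :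
    osc n G t = |c| * osc n H s := by
  change (⨆ z, G (t, z)) - (⨅ z, G (t, z)) = |c| * ((⨆ z, H (s, z)) - ⨅ z, H (s, z))
  simp only [h]
  rcases le_total 0 c with hc | hc
  · rw [← Real.mul_iSup_of_nonneg hc, ← Real.mul_iInf_of_nonneg hc, abs_of_nonneg hc]; ring
  · rw [← Real.mul_iSup_of_nonpos hc, ← Real.mul_iInf_of_nonpos hc, abs_of_nonpos hc]; ring

/-! ### Group operations with norm control -/

/-- `φ` is generated by an admissible Hamiltonian of norm less than `ε`; equivalently `φ ∈ Ham(E)`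
and its Hofer norm is less than `ε`. -/
def HamLt (n : ℕ) (φ : E n → E n) (ε : ℝ) : Prop :=
  ∃ H Φ, AdmissibleH n Set.univ H ∧ IsHamFlow n H Φ ∧ φ = Φ 1 ∧ HNorm n H < ε

lemma adm_of {n : ℕ} {G : ℝ × E n → ℝ} {C : Set (ℝ × E n)} (hG : ContDiff ℝ (⊤ : ℕ∞) G)
    (hC : IsCompact C) (h : ∀ p, G p ≠ 0 → p ∈ C) (hI : ∀ p ∈ C, p.1 ∈ Set.Icc (0 : ℝ) 1) :
    AdmissibleH n Set.univ G := by
  have hs : tsupport G ⊆ C := closure_minimal h hC.isClosed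
  exact ⟨hG, hC.of_isClosed_subset (isClosed_tsupport G) hs, fun p hp => ⟨hI p (hs hp), trivial⟩⟩

lemma HamLt.mem {n : ℕ} {φ : E n → E n} {ε : ℝ} (h : HamLt n φ ε) : φ ∈ HamGrp n Set.univ := by
  obtain ⟨H, Φ, h1, h2, h3, -⟩ := h
  exact ⟨H, Φ, h1, h2, h3⟩

lemma HamLt.hoferNorm_lt {n : ℕ} (hn : 1 ≤ n) {φ : E n → E n} {ε : ℝ} (h : HamLt n φ ε) :
    hoferNorm n Set.univ φ < ε := by
  obtain ⟨H, Φ, h1, h2, h3, h4⟩ := h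
  refine lt_of_le_of_lt (csInf_le ⟨0, ?_⟩ ⟨H, Φ, h1, h2, h3, rfl⟩) h4
  rintro _ ⟨H, Φ, h1, -, -, rfl⟩
  exact HNorm_nonneg hn h1

lemma hamLt_of_hoferNorm_lt {n : ℕ} {φ : E n → E n} {ε : ℝ} (h : φ ∈ HamGrp n Set.univ)
    (hε : hoferNorm n Set.univ φ < ε) : HamLt n φ ε := by
  obtain ⟨H, Φ, h1, h2, h3⟩ := h
  obtain ⟨_, ⟨H, Φ, h1, h2, h3, rfl⟩, h4⟩ := exists_lt_of_csInf_lt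
    (s := {c | ∃ H Φ, AdmissibleH n Set.univ H ∧ IsHamFlow n H Φ ∧ φ = Φ 1 ∧ c = HNorm n H})
    ⟨_, H, Φ, h1, h2, h3, rfl⟩ hε
  exact ⟨H, Φ, h1, h2, h3, h4⟩

lemma exists_hamLt {n : ℕ} {φ : E n → E n} (h : φ ∈ HamGrp n Set.univ) : ∃ ε, HamLt n φ ε :=
  ⟨_, hamLt_of_hoferNorm_lt h (lt_add_one _)⟩

/-- The inverse is generated by the time-reversed Hamiltonian `-H(1-t,·)`. -/
lemma HamLt.inv {n : ℕ} {φ χ : E n → E n} {ε : ℝ} (h : HamLt n φ ε)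
    (hr : Function.RightInverse χ φ) : HamLt n χ ε := by
  obtain ⟨H, Φ, h1, h2, rfl, h4⟩ := h
  refine ⟨fun p => (-1) * H (1 - p.1, p.2), fun t z => Φ (1 - t) (χ z), ?_, ⟨?_, ?_⟩, ?_, ?_⟩
  · refine adm_of (C := (fun p : ℝ × E n => (1 - p.1, p.2)) '' tsupport H) ?_ ?_ ?_ ?_
    · have := h1.1; fun_prop
    · exact h1.2.1.image (by fun_prop)
    · intro p hp
      refine ⟨(1 - p.1, p.2), subset_tsupport _ fun h0 => hp (by simp [h0]), by simp⟩
    · rintro _ ⟨p, hp, rfl⟩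
      have := (h1.2.2 hp).1
      simp only [Set.mem_Icc] at this ⊢
      constructor <;> linarith
  · intro z; simpa using hr z
  · intro z t
    rw [XH_slice (H := H) (s := 1 - t) (c := -1) (fun w => rfl) h1.1]
    exact (h2.2 (χ z) (1 - t)).scomp t ((hasDerivAt_id t).const_sub 1)
  · funext z; simp [h2.1]
  · have : HNorm n (fun p => (-1) * H (1 - p.1, p.2)) = HNorm n H := by
      have h5 : HNorm n (fun p => (-1) * H (1 - p.1, p.2)) = ∫ t in (0:ℝ)..1, osc n H (1 - t) := by
        refine intervalIntegral.integral_congr fun t _ => ?_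
        have := osc_slice (G := fun p => (-1) * H (1 - p.1, p.2)) (H := H) (t := t) (s := 1 - t)
          (c := -1) (fun w => rfl)
        rwa [abs_neg, abs_one, one_mul] at this
      rw [h5, intervalIntegral.integral_comp_sub_left (fun t => osc n H t) 1]
      simp [HNorm, osc]
    rwa [this]

/-- The composite is generated by running `H` in the first half of the unit time interval and `K` in
the second half, both at double speed. The concatenation is smooth because `H` and `K` vanish for
times outside `(0,1)`. -/
lemma HamLt.comp {n : ℕ} (hn : 1 ≤ n) {φ ψ : E n → E n} {a b : ℝ} (hψ : HamLt n ψ a)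
    (hφ : HamLt n φ b) : HamLt n (ψ ∘ φ) (a + b) := by
  obtain ⟨H, Φ, h1, h2, rfl, h4⟩ := hφ
  obtain ⟨K, Ψ, k1, k2, rfl, k4⟩ := hψ
  set G : ℝ × E n → ℝ := fun p => 2 * H (2 * p.1, p.2) + 2 * K (2 * p.1 - 1, p.2) with hG
  have g1 : ∀ t ≤ (1/2 : ℝ), ∀ w, G (t, w) = 2 * H (2 * t, w) := fun t ht w => by
    simp [hG, adm_zero k1 (t := 2 * t - 1) (.inl (by linarith))]
  have g2 : ∀ t, (1/2 : ℝ) ≤ t → ∀ w, G (t, w) = 2 * K (2 * t - 1, w) := fun t ht w => by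
    simp [hG, adm_zero h1 (t := 2 * t) (.inr (by linarith))]
  have gadm : AdmissibleH n Set.univ G := by
    refine adm_of (C := (fun p : ℝ × E n => (p.1 / 2, p.2)) '' tsupport H ∪
        (fun p : ℝ × E n => ((p.1 + 1) / 2, p.2)) '' tsupport K) ?_ ?_ ?_ ?_
    · have := h1.1; have := k1.1; fun_prop
    · exact (h1.2.1.image (by fun_prop)).union (k1.2.1.image (by fun_prop))
    · intro p hp
      by_cases h0 : H (2 * p.1, p.2) = 0
      · right
        refine ⟨(2 * p.1 - 1, p.2), subset_tsupport _ fun h0' => hp (by simp [hG, h0, h0']), ?_⟩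
        simp
      · left
        exact ⟨(2 * p.1, p.2), subset_tsupport _ h0, by simp⟩
    · rintro _ (⟨p, hp, rfl⟩ | ⟨p, hp, rfl⟩)
      · have := (h1.2.2 hp).1
        simp only [Set.mem_Icc] at this ⊢
        constructor <;> linarith
      · have := (k1.2.2 hp).1
        simp only [Set.mem_Icc] at this ⊢
        constructor <;> linarith
  refine ⟨G, fun t z => Ψ (2 * t - 1) (Φ (2 * t) z), gadm, ⟨?_, ?_⟩, ?_, ?_⟩
  · intro z
    simp [h2.1, flow_before k1 k2 (t := -1) (by norm_num)]
  · intro z t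
    have e1 : ∀ s ≤ (1/2 : ℝ), Ψ (2 * s - 1) (Φ (2 * s) z) = Φ (2 * s) z := fun s hs =>
      flow_before k1 k2 (by linarith) _
    have e2 : ∀ s, (1/2 : ℝ) ≤ s → Ψ (2 * s - 1) (Φ (2 * s) z) = Ψ (2 * s - 1) (Φ 1 z) :=
      fun s hs => by rw [flow_after h1 h2 (by linarith)]
    have d1 : t ≤ 1/2 → HasDerivAt (fun s => Φ (2 * s) z)
        (XH n G t (Ψ (2 * t - 1) (Φ (2 * t) z))) t := fun ht => by
      rw [XH_slice (g1 t ht) h1.1, e1 t ht]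
      have hd : HasDerivAt (fun s : ℝ => 2 * s) 2 t := by
        simpa using (hasDerivAt_id t).const_mul 2
      exact (h2.2 z (2 * t)).scomp t hd
    have d2 : 1/2 ≤ t → HasDerivAt (fun s => Ψ (2 * s - 1) (Φ 1 z))
        (XH n G t (Ψ (2 * t - 1) (Φ (2 * t) z))) t := fun ht => by
      rw [XH_slice (g2 t ht) k1.1, e2 t ht]
      have hd : HasDerivAt (fun s : ℝ => 2 * s - 1) 2 t := by
        simpa using ((hasDerivAt_id t).const_mul 2).sub_const 1
      exact (k2.2 (Φ 1 z) (2 * t - 1)).scomp t hd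
    rcases lt_trichotomy t (1/2) with ht | ht | ht
    · refine (d1 ht.le).congr_of_eventuallyEq ?_
      filter_upwards [Iio_mem_nhds ht] with s hs using e1 s (le_of_lt hs)
    · have c1 : HasDerivWithinAt (fun s => Ψ (2 * s - 1) (Φ (2 * s) z)) _ (Set.Iic t) t :=
        (d1 ht.le).hasDerivWithinAt.congr (fun s hs => e1 s (ht ▸ hs)) (e1 t ht.le)
      have c2 : HasDerivWithinAt (fun s => Ψ (2 * s - 1) (Φ (2 * s) z)) _ (Set.Ici t) t :=
        (d2 ht.ge).hasDerivWithinAt.congr (fun s hs => e2 s (ht ▸ hs)) (e2 t ht.ge)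
      have := c1.union c2
      rwa [Set.Iic_union_Ici, hasDerivWithinAt_univ] at this
    · refine (d2 ht.le).congr_of_eventuallyEq ?_
      filter_upwards [Ioi_mem_nhds ht] with s hs using e2 s (le_of_lt hs)
  · funext z
    simp only [Function.comp, mul_one, flow_after h1 h2 (t := 2) (by norm_num)]
    norm_num
  · have hosc : ∀ x y, IntervalIntegrable (osc n G) MeasureTheory.volume x y := fun x y =>
      (osc_continuous hn gadm).intervalIntegrable x y
    have hsplit : HNorm n G = (∫ t in (0:ℝ)..(1/2), osc n G t) + ∫ t in (1/2:ℝ)..1, osc n G t :=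
      (intervalIntegral.integral_add_adjacent_intervals (hosc _ _) (hosc _ _)).symm
    have i1 : (∫ t in (0:ℝ)..(1/2), osc n G t) = HNorm n H := by
      have : (∫ t in (0:ℝ)..(1/2), osc n G t) = ∫ t in (0:ℝ)..(1/2), 2 * osc n H (2 * t) := by
        refine intervalIntegral.integral_congr fun t ht => ?_
        rw [Set.uIcc_of_le (by norm_num)] at ht
        simpa using osc_slice (g1 t ht.2)
      rw [this, intervalIntegral.integral_const_mul,
        intervalIntegral.integral_comp_mul_left (fun t => osc n H t) two_ne_zero]
      simp [HNorm, osc]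
    have i2 : (∫ t in (1/2:ℝ)..1, osc n G t) = HNorm n K := by
      have : (∫ t in (1/2:ℝ)..1, osc n G t) = ∫ t in (1/2:ℝ)..1, 2 * osc n K (2 * t - 1) := by
        refine intervalIntegral.integral_congr fun t ht => ?_
        rw [Set.uIcc_of_le (by norm_num)] at ht
        simpa using osc_slice (g2 t ht.1)
      rw [this, intervalIntegral.integral_const_mul,
        intervalIntegral.integral_comp_mul_sub (fun t => osc n K t) two_ne_zero]
      norm_num [HNorm, osc]
      ring
    rw [hsplit, i1, i2]; linarith

/-! ### Symplectic conjugation -/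

/-- A smooth symplectic diffeomorphism of `E` lying in `Ham(E)`, with the properties of the inverse
recorded as well. -/
structure NiceHam (n : ℕ) (f : Equiv.Perm (E n)) : Prop where
  smooth : ContDiff ℝ (⊤ : ℕ∞) f
  smooth_inv : ContDiff ℝ (⊤ : ℕ∞) (f⁻¹ : Equiv.Perm (E n))
  sympl : ∀ z u v, omega0 n (fderiv ℝ f z u) (fderiv ℝ f z v) = omega0 n u v
  sympl_inv : ∀ z u v, omega0 n (fderiv ℝ (f⁻¹ : Equiv.Perm (E n)) z u)
    (fderiv ℝ (f⁻¹ : Equiv.Perm (E n)) z v) = omega0 n u v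
  ham : (f : E n → E n) ∈ HamGrp n Set.univ

/-- Invariance of the Hofer norm: the conjugate `f φ f⁻¹` is generated by `H(t, f⁻¹ ·)`. -/
lemma HamLt.conj {n : ℕ} {φ f : Equiv.Perm (E n)} {ε : ℝ} (h : HamLt n φ ε)
    (hf : ContDiff ℝ (⊤ : ℕ∞) f) (hg : ContDiff ℝ (⊤ : ℕ∞) (f⁻¹ : Equiv.Perm (E n)))
    (hs : ∀ z u v, omega0 n (fderiv ℝ f z u) (fderiv ℝ f z v) = omega0 n u v) :
    HamLt n (f * φ * f⁻¹ : Equiv.Perm (E n)) ε := by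
  obtain ⟨H, Φ, h1, h2, h3, h4⟩ := h
  set g : E n → E n := ⇑(f⁻¹ : Equiv.Perm (E n)) with hgdef
  have hfg : ∀ z, f (g z) = z := fun z => f.apply_symm_apply z
  have hgf : ∀ z, g (f z) = z := fun z => f.symm_apply_apply z
  refine ⟨fun p => H (p.1, g p.2), fun t z => f (Φ t (g z)), ?_, ⟨?_, ?_⟩, ?_, ?_⟩
  · refine adm_of (C := (fun p : ℝ × E n => (p.1, f p.2)) '' tsupport H) ?_ ?_ ?_ ?_
    · have := h1.1; fun_prop
    · have := hf.continuous; exact h1.2.1.image (by fun_prop)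
    · intro p hp
      exact ⟨(p.1, g p.2), subset_tsupport _ hp, by simp [hfg]⟩
    · rintro _ ⟨p, hp, rfl⟩
      exact (h1.2.2 hp).1
  · intro z; simp [h2.1, hfg]
  · intro z t
    have hfd : ∀ w, HasFDerivAt f (fderiv ℝ f w) w := fun w =>
      (hf.differentiable (by simp) w).hasFDerivAt
    have hgd : ∀ w, HasFDerivAt g (fderiv ℝ g w) w := fun w =>
      (hg.differentiable (by simp) w).hasFDerivAt
    set y := Φ t (g z) with hy
    have hX : XH n (fun p => H (p.1, g p.2)) t (f y) = fderiv ℝ f y (XH n H t y) := by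
      apply XH_eq_of_omega0
      intro v
      have hHd : DifferentiableAt ℝ (fun w => H (t, w)) (g (f y)) := by
        have : ContDiff ℝ (⊤ : ℕ∞) (fun w => H (t, w)) := by have := h1.1; fun_prop
        exact this.differentiable (by simp) _
      have e1 : fderiv ℝ (fun w => H (t, g w)) (f y) =
          (fderiv ℝ (fun w => H (t, w)) (g (f y))).comp (fderiv ℝ g (f y)) :=
        (hHd.hasFDerivAt.comp (f y) (hgd (f y))).fderiv
      have e2 : fderiv ℝ f y (fderiv ℝ g (f y) v) = v := by
        have hc : HasFDerivAt (fun w => f (g w)) _ (f y) :=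
          HasFDerivAt.comp (f y) (hfd (g (f y))) (hgd (f y))
        have hid : (fun w => f (g w)) = id := funext hfg
        rw [hid] at hc
        have := hc.unique (hasFDerivAt_id (f y))
        have := congrArg (fun L => L v) this
        simpa [hgf] using this
      change _ = fderiv ℝ (fun w => H (t, g w)) (f y) v
      rw [e1, ContinuousLinearMap.comp_apply, hgf, ← omega0_XH, ← hs y _ (fderiv ℝ g (f y) v), e2]
    rw [hX]
    exact (hfd y).comp_hasDerivAt t (h2.2 (g z) t)
  · rw [Equiv.Perm.coe_mul, Equiv.Perm.coe_mul, h3]; rfl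
  · have : HNorm n (fun p => H (p.1, g p.2)) = HNorm n H := by
      refine intervalIntegral.integral_congr fun t _ => ?_
      have hr : (Set.range fun z => H (t, g z)) = Set.range fun z => H (t, z) :=
        (f⁻¹ : Equiv.Perm (E n)).surjective.range_comp (fun z => H (t, z))
      simp only [hr]
    rwa [this]

lemma NiceHam.conj {n : ℕ} {φ f : Equiv.Perm (E n)} {ε : ℝ} (hf : NiceHam n f) (h : HamLt n φ ε) :
    HamLt n (f * φ * f⁻¹ : Equiv.Perm (E n)) ε :=
  h.conj hf.smooth hf.smooth_inv hf.sympl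

lemma NiceHam.conj_inv {n : ℕ} {φ f : Equiv.Perm (E n)} {ε : ℝ} (hf : NiceHam n f)
    (h : HamLt n φ ε) : HamLt n (f⁻¹ * φ * f : Equiv.Perm (E n)) ε := by
  simpa using h.conj (f := f⁻¹) hf.smooth_inv (by simpa using hf.smooth) hf.sympl_inv

/-! ### Twist maps -/

/-- The Euclidean inner product on `E` (whose Mathlib norm is a sup norm). -/
def dotp {n : ℕ} (z w : E n) : ℝ := ∑ i, (z.1 i * w.1 i + z.2 i * w.2 i)

lemma dotp_comm {n : ℕ} (z w : E n) : dotp z w = dotp w z :=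
  Finset.sum_congr rfl fun i _ => by ring

lemma dotp_add {n : ℕ} (z w v : E n) : dotp z (w + v) = dotp z w + dotp z v := by
  simp only [dotp, ← Finset.sum_add_distrib]
  exact Finset.sum_congr rfl fun i _ => by simp; ring

lemma dotp_smul {n : ℕ} (s : ℝ) (z w : E n) : dotp z (s • w) = s * dotp z w := by
  simp only [dotp, Finset.mul_sum]
  exact Finset.sum_congr rfl fun i _ => by simp; ring

lemma norm_sq_le_dotp {n : ℕ} (z : E n) : ‖z‖ ^ 2 ≤ dotp z z := by
  have h0 : 0 ≤ dotp z z := Finset.sum_nonneg fun i _ => add_nonneg (mul_self_nonneg _) (mul_self_nonneg _)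
  have hi : ∀ i, z.1 i * z.1 i + z.2 i * z.2 i ≤ dotp z z := fun i =>
    Finset.single_le_sum (f := fun i => z.1 i * z.1 i + z.2 i * z.2 i)
      (fun i _ => add_nonneg (mul_self_nonneg _) (mul_self_nonneg _)) (Finset.mem_univ i)
  have : ‖z‖ ≤ Real.sqrt (dotp z z) := by
    rw [Prod.norm_def]
    refine max_le ?_ ?_ <;> rw [pi_norm_le_iff_of_nonneg (Real.sqrt_nonneg _)] <;> intro i <;>
      apply Real.abs_le_sqrt <;> nlinarith [hi i, mul_self_nonneg (z.1 i), mul_self_nonneg (z.2 i)]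
  calc ‖z‖ ^ 2 ≤ Real.sqrt (dotp z z) ^ 2 := by gcongr
    _ = dotp z z := Real.sq_sqrt h0

lemma dotp_self_pos {n : ℕ} {z : E n} (hz : z ≠ 0) : 0 < dotp z z :=
  lt_of_lt_of_le (by positivity) (norm_sq_le_dotp z)

/-- The rotation `exp(-iα)` of `E = ℂⁿ`, the direction in which the Hamiltonian flow of a radial
function rotates. -/
def rot {n : ℕ} (α : ℝ) (z : E n) : E n :=
  (fun i => Real.cos α * z.1 i + Real.sin α * z.2 i,
   fun i => -Real.sin α * z.1 i + Real.cos α * z.2 i)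

lemma dotp_rot {n : ℕ} (α : ℝ) (z : E n) : dotp (rot α z) (rot α z) = dotp z z := by
  refine Finset.sum_congr rfl fun i _ => ?_
  simp only [rot]
  linear_combination (z.1 i * z.1 i + z.2 i * z.2 i) * Real.sin_sq_add_cos_sq α

lemma rot_rot_neg {n : ℕ} (α : ℝ) (z : E n) : rot (-α) (rot α z) = z := by
  refine Prod.ext ?_ ?_ <;> funext i <;> simp only [rot, Real.cos_neg, Real.sin_neg]
  · linear_combination (z.1 i) * Real.sin_sq_add_cos_sq α
  · linear_combination (z.2 i) * Real.sin_sq_add_cos_sq α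

/-- The twist about `c`: rotation by an angle `A(|z - c|²)` depending on the distance to `c`. -/
def tw {n : ℕ} (c : E n) (A : ℝ → ℝ) (z : E n) : E n := c + rot (A (dotp (z - c) (z - c))) (z - c)

lemma tw_tw_neg {n : ℕ} (c : E n) (A : ℝ → ℝ) (z : E n) : tw c (fun s => -A s) (tw c A z) = z := by
  simp only [tw, add_sub_cancel_left, dotp_rot, rot_rot_neg, add_sub_cancel]

lemma tw_neg_tw {n : ℕ} (c : E n) (A : ℝ → ℝ) (z : E n) : tw c A (tw c (fun s => -A s) z) = z := by
  simpa using tw_tw_neg c (fun s => -A s) z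

lemma tw_eq_self {n : ℕ} {c : E n} {A : ℝ → ℝ} {z : E n} (h : A (dotp (z - c) (z - c)) = 0) :
    tw c A z = z := by
  have : rot 0 (z - c) = z - c := by
    refine Prod.ext ?_ ?_ <;> funext i <;> simp [rot]
  rw [tw, h, this, add_sub_cancel]

lemma tw_smooth {n : ℕ} (c : E n) {A : ℝ → ℝ} (hA : ContDiff ℝ (⊤ : ℕ∞) A) :
    ContDiff ℝ (⊤ : ℕ∞) (tw c A) := by
  have hd : ContDiff ℝ (⊤ : ℕ∞) fun z : E n => dotp (z - c) (z - c) := by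
    unfold dotp; simp only [Prod.fst_sub, Prod.snd_sub, Pi.sub_apply]; fun_prop
  have hα : ContDiff ℝ (⊤ : ℕ∞) fun z : E n => A (dotp (z - c) (z - c)) := hA.comp hd
  unfold tw rot
  simp only [Prod.fst_sub, Prod.snd_sub, Pi.sub_apply]
  refine contDiff_const.add (ContDiff.prodMk (contDiff_pi.2 fun i => ?_) (contDiff_pi.2 fun i => ?_))
  · exact (hα.cos.mul (by fun_prop)).add (hα.sin.mul (by fun_prop))
  · exact (hα.sin.neg.mul (by fun_prop)).add (hα.cos.mul (by fun_prop))

lemma dotp_line {n : ℕ} (w u : E n) :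
    HasDerivAt (fun s : ℝ => dotp (w + s • u) (w + s • u)) (2 * dotp w u) 0 := by
  have : (fun s : ℝ => dotp (w + s • u) (w + s • u)) =
      fun s => dotp w w + (2 * dotp w u) * s + dotp u u * s ^ 2 := by
    funext s
    rw [dotp_add, dotp_comm _ w, dotp_comm _ (s • u), dotp_add, dotp_add, dotp_smul,
      dotp_comm (s • u) w, dotp_comm (s • u) (s • u), dotp_smul, dotp_smul, dotp_comm (s • u) u,
      dotp_smul]
    ring
  rw [this]
  have h := (((hasDerivAt_id (0:ℝ)).const_mul (2 * dotp w u)).const_add (dotp w w)).add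
    ((hasDerivAt_pow 2 (0:ℝ)).const_mul (dotp u u))
  refine h.congr_deriv ?_
  simp

lemma fderiv_of_line {n : ℕ} {F : Type*} [NormedAddCommGroup F] [NormedSpace ℝ F] {f : E n → F}
    {z v : E n} {d : F} (hf : ContDiff ℝ (⊤ : ℕ∞) f)
    (h : HasDerivAt (fun s : ℝ => f (z + s • v)) d 0) : fderiv ℝ f z v = d := by
  rw [← (hf.differentiable (by simp) z).lineDeriv_eq_fderiv]
  exact HasLineDerivAt.lineDeriv h

lemma tw_fderiv {n : ℕ} (c : E n) {A : ℝ → ℝ} (hA : ContDiff ℝ (⊤ : ℕ∞) A) (z u : E n) :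
    fderiv ℝ (tw c A) z u =
      rot (A (dotp (z - c) (z - c))) u +
      (deriv A (dotp (z - c) (z - c)) * (2 * dotp (z - c) u)) •
        rot (A (dotp (z - c) (z - c))) ((z - c).2, -(z - c).1) := by
  apply fderiv_of_line (tw_smooth c hA)
  set w := z - c with hw
  have e : ∀ s : ℝ, z + s • u - c = w + s • u := fun s => by rw [hw]; abel
  have ha : HasDerivAt (fun s : ℝ => A (dotp (w + s • u) (w + s • u)))
      (deriv A (dotp w w) * (2 * dotp w u)) 0 := by
    have h1 : HasDerivAt A (deriv A (dotp w w)) (dotp (w + (0:ℝ) • u) (w + (0:ℝ) • u)) := by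
      rw [zero_smul, add_zero]
      exact (hA.differentiable (by simp) _).hasDerivAt
    exact h1.comp 0 (dotp_line w u)
  unfold tw
  simp only [e]
  set k := deriv A (dotp w w) * (2 * dotp w u)
  have h1 : ∀ i, HasDerivAt (fun s : ℝ => (w + s • u).1 i) (u.1 i) 0 := fun i => by
    simpa using ((hasDerivAt_id (0:ℝ)).mul_const (u.1 i)).const_add (w.1 i)
  have h2 : ∀ i, HasDerivAt (fun s : ℝ => (w + s • u).2 i) (u.2 i) 0 := fun i => by
    simpa using ((hasDerivAt_id (0:ℝ)).mul_const (u.2 i)).const_add (w.2 i)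
  refine HasDerivAt.const_add c ?_
  have hp1 : HasDerivAt (fun s : ℝ => (rot (A (dotp (w + s • u) (w + s • u))) (w + s • u)).1)
      (rot (A (dotp w w)) u + k • rot (A (dotp w w)) (w.2, -w.1)).1 0 := by
    refine hasDerivAt_pi.2 fun i => ?_
    have := (ha.cos.mul (h1 i)).add (ha.sin.mul (h2 i))
    refine this.congr_deriv ?_
    simp [rot]; ring
  have hp2 : HasDerivAt (fun s : ℝ => (rot (A (dotp (w + s • u) (w + s • u))) (w + s • u)).2)
      (rot (A (dotp w w)) u + k • rot (A (dotp w w)) (w.2, -w.1)).2 0 := by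
    refine hasDerivAt_pi.2 fun i => ?_
    have := (ha.sin.neg.mul (h1 i)).add (ha.cos.mul (h2 i))
    refine this.congr_deriv ?_
    simp [rot]; ring
  exact hp1.prodMk hp2

/-- Twists are symplectic: the two terms coming from the variation of the angle cancel, since both
equal `2 A' ⟨w,u⟩⟨w,v⟩` with `w = z - c`. -/
lemma tw_sympl {n : ℕ} (c : E n) {A : ℝ → ℝ} (hA : ContDiff ℝ (⊤ : ℕ∞) A) (z u v : E n) :
    omega0 n (fderiv ℝ (tw c A) z u) (fderiv ℝ (tw c A) z v) = omega0 n u v := by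
  rw [tw_fderiv c hA, tw_fderiv c hA]
  set w := z - c
  set α := A (dotp w w)
  set k := deriv A (dotp w w)
  have key : ∀ a b : ℝ, omega0 n (rot α u + a • rot α (w.2, -w.1)) (rot α v + b • rot α (w.2, -w.1))
      = omega0 n u v + a * dotp w v - b * dotp w u := by
    intro a b
    simp only [omega0, dotp, Finset.mul_sum, ← Finset.sum_sub_distrib, ← Finset.sum_add_distrib]
    refine Finset.sum_congr rfl fun i _ => ?_
    simp only [rot, Prod.fst_add, Prod.snd_add, Prod.smul_fst, Prod.smul_snd, Pi.add_apply,
      Pi.smul_apply, Pi.neg_apply, smul_eq_mul]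
    linear_combination (u.1 i * v.2 i - u.2 i * v.1 i + a * (w.1 i * v.1 i + w.2 i * v.2 i)
      - b * (w.1 i * u.1 i + w.2 i * u.2 i)) * Real.sin_sq_add_cos_sq α
  rw [key]; ring

/-- The twist with angle function `2T'` is the time-one map of `β(t) T(|z - c|²)`, where `β` is the
derivative of a smooth step from `0` to `1`. -/
lemma tw_ham {n : ℕ} (c : E n) {T : ℝ → ℝ} (hT : ContDiff ℝ (⊤ : ℕ∞) T) {M : ℝ} (hM : 1 ≤ M)
    (hTM : ∀ s, M ≤ s → T s = 0) :
    tw c (fun s => 2 * deriv T s) ∈ HamGrp n Set.univ := by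
  have hB : ContDiff ℝ (⊤ : ℕ∞) Real.smoothTransition := Real.smoothTransition.contDiff
  have hβ : ContDiff ℝ (⊤ : ℕ∞) (deriv Real.smoothTransition) :=
    (contDiff_infty_iff_deriv.1 hB).2
  have hβ0 : ∀ t, deriv Real.smoothTransition t ≠ 0 → t ∈ Set.Icc (0:ℝ) 1 := by
    intro t ht
    by_contra h
    apply ht
    simp only [Set.mem_Icc, not_and_or, not_le] at h
    rcases h with h | h
    · have : Real.smoothTransition =ᶠ[𝓝 t] fun _ => 0 := by
        filter_upwards [Iio_mem_nhds h] with s hs using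
          Real.smoothTransition.zero_of_nonpos (le_of_lt hs)
      rw [this.deriv_eq]; simp
    · have : Real.smoothTransition =ᶠ[𝓝 t] fun _ => 1 := by
        filter_upwards [Ioi_mem_nhds h] with s hs using
          Real.smoothTransition.one_of_one_le (le_of_lt hs)
      rw [this.deriv_eq]; simp
  have hd : ContDiff ℝ (⊤ : ℕ∞) fun z : E n => dotp (z - c) (z - c) := by
    unfold dotp; simp only [Prod.fst_sub, Prod.snd_sub, Pi.sub_apply]; fun_prop
  have hF : ContDiff ℝ (⊤ : ℕ∞) fun z : E n => T (dotp (z - c) (z - c)) := hT.comp hd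
  refine ⟨fun p => deriv Real.smoothTransition p.1 * T (dotp (p.2 - c) (p.2 - c)),
    fun t => tw c (fun s => Real.smoothTransition t * (2 * deriv T s)), ?_, ⟨?_, ?_⟩, ?_⟩
  · refine adm_of (C := Set.Icc (0:ℝ) 1 ×ˢ Metric.closedBall c M) ?_
      (isCompact_Icc.prod (isCompact_closedBall c M)) ?_ (fun p hp => hp.1)
    · exact (hβ.comp contDiff_fst).mul (hF.comp contDiff_snd)
    · intro p hp
      refine ⟨hβ0 _ (left_ne_zero_of_mul hp), ?_⟩
      rw [mem_closedBall_iff_norm]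
      have h1 : dotp (p.2 - c) (p.2 - c) < M := by
        by_contra h
        exact right_ne_zero_of_mul hp (hTM _ (not_lt.1 h))
      have := norm_sq_le_dotp (p.2 - c)
      by_contra h2
      nlinarith [norm_nonneg (p.2 - c)]
  · intro z
    apply tw_eq_self
    simp [Real.smoothTransition.zero]
  · intro z t
    set w := z - c with hw
    set a := 2 * deriv T (dotp w w) with ha
    set B := Real.smoothTransition
    have hdist : dotp (tw c (fun s => B t * (2 * deriv T s)) z - c)
        (tw c (fun s => B t * (2 * deriv T s)) z - c) = dotp w w := by
      rw [tw, add_sub_cancel_left, dotp_rot]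
    set y := tw c (fun s => B t * (2 * deriv T s)) z with hy
    have hyc : y - c = rot (B t * a) w := by rw [hy, tw, add_sub_cancel_left]
    have hX : XH n (fun p => deriv B p.1 * T (dotp (p.2 - c) (p.2 - c))) t y =
        (deriv B t * a) • (((y - c).2, -(y - c).1) : E n) := by
      apply XH_eq_of_omega0
      intro v
      have : fderiv ℝ (fun q => deriv B t * T (dotp (q - c) (q - c))) y v =
          deriv B t * (deriv T (dotp w w) * (2 * dotp (y - c) v)) := by
        apply fderiv_of_line (contDiff_const.mul hF)
        refine HasDerivAt.const_mul _ ?_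
        have e : ∀ s : ℝ, y + s • v - c = (y - c) + s • v := fun s => by abel
        simp only [e]
        have h1 : HasDerivAt T (deriv T (dotp w w))
            (dotp ((y - c) + (0:ℝ) • v) ((y - c) + (0:ℝ) • v)) := by
          rw [zero_smul, add_zero, hdist]
          exact (hT.differentiable (by simp) _).hasDerivAt
        exact h1.comp 0 (dotp_line (y - c) v)
      change _ = fderiv ℝ (fun q => deriv B t * T (dotp (q - c) (q - c))) y v
      rw [this]
      simp only [omega0, dotp, Finset.mul_sum, ← Finset.sum_sub_distrib]
      refine Finset.sum_congr rfl fun i _ => ?_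
      simp [ha, hw, dotp]
      ring
    rw [hX, hyc]
    have hBd : HasDerivAt (fun s => B s * a) (deriv B t * a) t :=
      ((hB.differentiable (by simp) t).hasDerivAt).mul_const a
    change HasDerivAt (fun s => c + rot (B s * a) w) _ t
    refine HasDerivAt.const_add c (HasDerivAt.prodMk ?_ ?_)
    · refine hasDerivAt_pi.2 fun i => ?_
      refine ((hBd.cos.mul_const (w.1 i)).add (hBd.sin.mul_const (w.2 i))).congr_deriv ?_
      simp [rot]; ring
    · refine hasDerivAt_pi.2 fun i => ?_
      refine ((hBd.sin.neg.mul_const (w.1 i)).add (hBd.cos.mul_const (w.2 i))).congr_deriv ?_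
      simp [rot]; ring
  · simp [Real.smoothTransition.one]

/-- A half-turn about the midpoint of `a` and `b`, cut off to a thin shell, moves `a` to `b`. -/
lemma exists_twist {n : ℕ} (a b : E n) {η : ℝ} (hη : 0 < η) :
    ∃ f : Equiv.Perm (E n), NiceHam n f ∧ f a = b ∧ ∀ z,
      η ≤ |dotp (z - (1/2 : ℝ) • (a + b)) (z - (1/2 : ℝ) • (a + b)) -
        dotp (a - (1/2 : ℝ) • (a + b)) (a - (1/2 : ℝ) • (a + b))| → f z = z := by
  set c := (1/2 : ℝ) • (a + b) with hc
  set r := dotp (a - c) (a - c) with hr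
  let bump : ContDiffBump r := ⟨η / 4, η / 2, by positivity, by linarith⟩
  set T : ℝ → ℝ := fun s => Real.pi / 2 * (s - r) * bump s with hTdef
  have hT : ContDiff ℝ (⊤ : ℕ∞) T := by
    have := bump.contDiff (n := (⊤ : ℕ∞)); fun_prop
  have hT0 : ∀ s, η / 2 ≤ |s - r| → T s = 0 := fun s hs => by
    simp [hTdef, bump.zero_of_le_dist (x := s) (by simpa [Real.dist_eq] using hs)]
  have hdT : ContDiff ℝ (⊤ : ℕ∞) (deriv T) := (contDiff_infty_iff_deriv.1 hT).2
  have hA : ContDiff ℝ (⊤ : ℕ∞) (fun s => 2 * deriv T s) := contDiff_const.mul hdT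
  have hdT0 : ∀ s, η ≤ |s - r| → deriv T s = 0 := fun s hs => by
    have : T =ᶠ[𝓝 s] fun _ => 0 := by
      have hcont : ContinuousAt (fun x => |x - r|) s := by fun_prop
      filter_upwards [hcont.eventually (lt_mem_nhds (show η / 2 < |s - r| by linarith))] with x hx
        using hT0 x hx.le
    rw [this.deriv_eq]; simp
  have hdTr : deriv T r = Real.pi / 2 := by
    have : T =ᶠ[𝓝 r] fun s => Real.pi / 2 * (s - r) := by
      filter_upwards [bump.eventuallyEq_one] with x hx
      simp [hTdef, hx]
    rw [this.deriv_eq]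
    have h : HasDerivAt (fun s => Real.pi / 2 * (s - r)) (Real.pi / 2 * 1) r :=
      ((hasDerivAt_id r).sub_const r).const_mul (Real.pi / 2)
    rw [h.deriv, mul_one]
  let f : Equiv.Perm (E n) :=
    ⟨tw c (fun s => 2 * deriv T s), tw c (fun s => -(2 * deriv T s)), tw_tw_neg c _, tw_neg_tw c _⟩
  have hr0 : 0 ≤ r := Finset.sum_nonneg fun i _ => add_nonneg (mul_self_nonneg _) (mul_self_nonneg _)
  have hfc : ⇑f = tw c (fun s => 2 * deriv T s) := rfl
  have hfi : ⇑f⁻¹ = tw c (fun s => -(2 * deriv T s)) := rfl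
  clear_value f
  have hnice : NiceHam n f := by
    constructor
    · rw [hfc]; exact tw_smooth c hA
    · rw [hfi]; exact tw_smooth c hA.neg
    · rw [hfc]; exact tw_sympl c hA
    · rw [hfi]; exact tw_sympl c hA.neg
    rw [hfc]
    refine tw_ham c hT (M := r + η + 1) (by linarith) fun s hs => hT0 s ?_
    rw [abs_of_nonneg] <;> linarith
  refine ⟨f, hnice, ?_, ?_⟩ <;> rw [hfc]
  · have hπ : 2 * deriv T r = Real.pi := by rw [hdTr]; ring
    rw [tw, ← hr, hπ]
    refine Prod.ext ?_ ?_ <;> funext i <;> simp [rot, hc] <;> ring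
  · intro z hz
    exact tw_eq_self (by rw [hdT0 _ hz, mul_zero])

/-- Points near `p` are reached from `p` by twists supported in a ball about `p`. -/
lemma exists_local_twist {n : ℕ} {p q : E n} {δ : ℝ} (hδ : 0 < δ)
    (hq : dotp (q - p) (q - p) < δ ^ 2 / 4) :
    ∃ f : Equiv.Perm (E n), NiceHam n f ∧ f p = q ∧ ∀ z, z ∉ Metric.ball p δ → f z = z := by
  obtain ⟨f, hf, hpq, hz⟩ := exists_twist p q (η := δ ^ 2 / 16) (by positivity)
  refine ⟨f, hf, hpq, fun z hzp => hz z ?_⟩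
  set c := (1/2 : ℝ) • (p + q) with hc
  have h1 : dotp (p - c) (p - c) = dotp (q - p) (q - p) / 4 := by
    have : p - c = (-(1/2) : ℝ) • (q - p) := by rw [hc]; module
    rw [this, dotp_smul, dotp_comm, dotp_smul]; ring
  have h2 := norm_sq_le_dotp (p - c)
  have h3 := norm_sq_le_dotp (z - c)
  have h4 : ‖p - c‖ ≤ δ / 4 := by
    by_contra h; nlinarith [norm_nonneg (p - c)]
  have h5 : δ ≤ ‖z - p‖ := by simpa [dist_eq_norm] using hzp
  have h6 : ‖z - p‖ ≤ ‖z - c‖ + ‖p - c‖ := by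
    have : z - p = (z - c) - (p - c) := by abel
    rw [this]; exact norm_sub_le _ _
  have h7 : 3 * δ / 4 ≤ ‖z - c‖ := by linarith
  refine le_trans ?_ (le_abs_self _)
  nlinarith

lemma exists_near {n : ℕ} (hn : 1 ≤ n) (p : E n) {δ : ℝ} (hδ : 0 < δ) :
    ∃ q, q ≠ p ∧ dotp (q - p) (q - p) < δ ^ 2 / 4 := by
  refine ⟨p + (Pi.single ⟨0, hn⟩ (δ / 4), 0), ?_, ?_⟩
  · intro h
    have := congrFun (congrArg Prod.fst h) ⟨0, hn⟩
    simp at this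
    exact hδ.ne' this
  · rw [add_sub_cancel_left]
    simp only [dotp, Pi.zero_apply, mul_zero, add_zero, Pi.single_apply]
    simp
    nlinarith

/-! ### Non-rigid points can be moved off `N` -/

lemma exists_perm_of_ham {n : ℕ} {φ : E n → E n} (h : φ ∈ HamGrp n Set.univ) :
    ∃ f : Equiv.Perm (E n), ⇑f = φ := by
  obtain ⟨H, Φ, h1, h2, rfl⟩ := h
  exact ⟨Equiv.ofBijective _ (flow_bijective h1 h2), rfl⟩

lemma HamLt.perm_inv {n : ℕ} {f : Equiv.Perm (E n)} {ε : ℝ} (h : HamLt n f ε) :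
    HamLt n (f⁻¹ : Equiv.Perm (E n)) ε :=
  h.inv f.apply_symm_apply

lemma HamLt.perm_mul {n : ℕ} (hn : 1 ≤ n) {f g : Equiv.Perm (E n)} {a b : ℝ} (hf : HamLt n f a)
    (hg : HamLt n g b) : HamLt n (f * g : Equiv.Perm (E n)) (a + b) :=
  hf.comp hn hg

lemma hamLt_one {n : ℕ} {ε : ℝ} (hε : 0 < ε) : HamLt n (1 : Equiv.Perm (E n)) ε := by
  refine ⟨fun _ => 0, fun _ z => z, ?_, ⟨fun _ => rfl, fun z t => ?_⟩, rfl, ?_⟩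
  · exact adm_of (C := ∅) contDiff_const isCompact_empty (by simp) (by simp)
  · have : XH n (fun _ => 0) t z = 0 := by
      refine Prod.ext ?_ ?_ <;> funext i <;> simp [XH]
    rw [this]; exact hasDerivAt_const t z
  · simpa [HNorm] using hε

lemma one_mem_sigma {n : ℕ} (N : Set (E n)) : ⇑(1 : Equiv.Perm (E n)) ∈ SigmaGrp n N :=
  ⟨(hamLt_one one_pos).mem, by simp⟩

/-- Elements of vanishing Hofer norm belong to `Σ̄_N`. -/
lemma mem_sigmaBar_of_zero {n : ℕ} (hn : 1 ≤ n) (N : Set (E n)) {f : Equiv.Perm (E n)}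
    (h : ∀ ε > 0, HamLt n f ε) : ⇑f ∈ SigmaBar n N :=
  ⟨(h 1 one_pos).mem, fun ε hε => ⟨_, one_mem_sigma N, id, fun _ => rfl, fun _ => rfl,
    (h ε hε).hoferNorm_lt hn⟩⟩

/-- If a set `S` is displaced from `N` with arbitrarily small energy, then `Σ̄_N` contains every
`f` supported in `S`: for `φ` displacing `S`, the conjugate `φ f φ⁻¹` fixes `N` pointwise and is at
Hofer distance at most `2‖φ‖` from `f`. -/
lemma mem_sigmaBar_of_supported {n : ℕ} (hn : 1 ≤ n) {N S : Set (E n)}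
    (hS : ∀ ε > 0, ∃ φ : Equiv.Perm (E n), HamLt n φ ε ∧ ∀ x ∈ S, φ x ∉ N)
    {f : Equiv.Perm (E n)} (hf : NiceHam n f) (hfS : ∀ x, x ∉ S → f x = x) :
    ⇑f ∈ SigmaBar n N := by
  refine ⟨hf.ham, fun ε hε => ?_⟩
  obtain ⟨φ, hφ, hd⟩ := hS (ε / 2) (by positivity)
  obtain ⟨C, hC⟩ := exists_hamLt hf.ham
  have hfix : ∀ x ∈ N, (φ * f * φ⁻¹ : Equiv.Perm (E n)) x = x := by
    intro x hx
    have : φ⁻¹ x ∉ S := fun h => hd _ h (by simpa using hx)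
    rw [Equiv.Perm.mul_apply, Equiv.Perm.mul_apply, hfS _ this]
    exact φ.apply_symm_apply x
  refine ⟨(φ * f * φ⁻¹ : Equiv.Perm (E n)),
    ⟨((hφ.perm_mul hn hC).perm_mul hn hφ.perm_inv).mem, ?_⟩,
    ((φ * f * φ⁻¹)⁻¹ : Equiv.Perm (E n)), Equiv.symm_apply_apply _, Equiv.apply_symm_apply _, ?_⟩
  · rw [Set.image_congr hfix]; simp
  · have h1 : HamLt n (φ * (f⁻¹ * φ⁻¹ * f) : Equiv.Perm (E n)) (ε / 2 + ε / 2) :=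
      hφ.perm_mul hn (hf.conj_inv hφ.perm_inv)
    rw [add_halves] at h1
    have h2 : ((φ * f * φ⁻¹)⁻¹ : Equiv.Perm (E n)) * f = φ * (f⁻¹ * φ⁻¹ * f) := by group
    rw [← h2] at h1
    exact h1.hoferNorm_lt hn

/-- If `φ` displaces `S` from itself, commutators of maps supported in `S` have Hofer norm at most
`4‖φ‖`: such a commutator `[g, f]` equals `[g, [f, φ]]`. -/
lemma commutator_hamLt {n : ℕ} (hn : 1 ≤ n) {S : Set (E n)} {f g φ : Equiv.Perm (E n)} {ε : ℝ}
    (hf : NiceHam n f) (hg : NiceHam n g) (hfS : ∀ x, x ∉ S → f x = x)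
    (hgS : ∀ x, x ∉ S → g x = x) (hφ : HamLt n φ ε) (hd : ∀ x ∈ S, φ x ∉ S) :
    HamLt n (g * f * g⁻¹ * f⁻¹ : Equiv.Perm (E n)) (4 * ε) := by
  set m : Equiv.Perm (E n) := φ * f⁻¹ * φ⁻¹ with hm
  have hmS : ∀ x ∈ S, m x = x := by
    intro x hx
    have h1 : φ⁻¹ x ∉ S := fun h => hd _ h (by simpa using hx)
    have h2 : f⁻¹ (φ⁻¹ x) = φ⁻¹ x := Equiv.Perm.inv_eq_iff_eq.2 (hfS _ h1).symm
    rw [hm, Equiv.Perm.mul_apply, Equiv.Perm.mul_apply, h2]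
    exact φ.apply_symm_apply x
  have hcomm : Commute g m := Equiv.Perm.Disjoint.commute fun x => by
    by_cases hx : x ∈ S
    · exact .inr (hmS x hx)
    · exact .inl (hgS x hx)
  have hk : HamLt n (f * φ * f⁻¹ * φ⁻¹ : Equiv.Perm (E n)) (ε + ε) :=
    (hf.conj hφ).perm_mul hn hφ.perm_inv
  have hz := (hg.conj hk).perm_mul hn hk.perm_inv
  have hkm : f * φ * f⁻¹ * φ⁻¹ = f * m := by rw [hm]; group
  have e : g * (f * φ * f⁻¹ * φ⁻¹) * g⁻¹ * (f * φ * f⁻¹ * φ⁻¹)⁻¹ = g * f * g⁻¹ * f⁻¹ := by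
    rw [hkm]
    calc g * (f * m) * g⁻¹ * (f * m)⁻¹ = g * f * (m * g⁻¹) * m⁻¹ * f⁻¹ := by group
      _ = g * f * (g⁻¹ * m) * m⁻¹ * f⁻¹ := by rw [hcomm.inv_left.eq]
      _ = g * f * g⁻¹ * f⁻¹ := by group
  rw [e] at hz
  have e4 : ε + ε + (ε + ε) = 4 * ε := by ring
  rwa [e4] at hz

/-- A nontrivial element of vanishing Hofer norm can be conjugated so as to move `p` off `N`. -/
lemma exists_sigmaBar_of_zero {n : ℕ} (hn : 1 ≤ n) {N : Set (E n)} (hN : IsClosed N) {p q₀ x₀ : E n}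
    (hq₀ : q₀ ∉ N) {f : Equiv.Perm (E n)} (h : ∀ ε > 0, HamLt n f ε)
    (hx : f x₀ ≠ x₀) : ∃ φ ∈ SigmaBar n N, φ p ∉ N := by
  obtain ⟨h₁, hh₁, h₁x, -⟩ := exists_twist x₀ p one_pos
  set y := h₁ (f x₀) with hy
  have hyp : y - p ≠ 0 := by
    rw [sub_ne_zero, hy, ← h₁x]
    exact fun h => hx (h₁.injective h)
  have hpos := dotp_self_pos hyp
  -- Perturb `q₀` off the hyperplane through `p` orthogonal to `y - p`.
  obtain ⟨q, hqN, hq⟩ : ∃ q, q ∉ N ∧ dotp (y - p) (q - p) ≠ 0 := by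
    by_cases h0 : dotp (y - p) (q₀ - p) = 0
    · have hc : Filter.Tendsto (fun s : ℝ => q₀ + s • (y - p)) (𝓝[≠] 0) (𝓝 q₀) := by
        have : ContinuousAt (fun s : ℝ => q₀ + s • (y - p)) 0 := by fun_prop
        have h' := this.tendsto
        simp only [zero_smul, add_zero] at h'
        exact h'.mono_left nhdsWithin_le_nhds
      have ev := hc.eventually (hN.isOpen_compl.mem_nhds hq₀)
      obtain ⟨s, hs, hs0⟩ := (ev.and self_mem_nhdsWithin).exists
      refine ⟨q₀ + s • (y - p), hs, ?_⟩
      have : q₀ + s • (y - p) - p = (q₀ - p) + s • (y - p) := by abel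
      rw [this, dotp_add, h0, dotp_smul, zero_add]
      exact mul_ne_zero hs0 hpos.ne'
    · exact ⟨q₀, hq₀, h0⟩
  set c := (1/2 : ℝ) • (y + q) with hc
  have hne : dotp (p - c) (p - c) - dotp (y - c) (y - c) = dotp (y - p) (q - p) := by
    simp only [dotp, ← Finset.sum_sub_distrib]
    refine Finset.sum_congr rfl fun i _ => ?_
    simp [hc]; ring
  obtain ⟨h₂, hh₂, h₂y, h₂fix⟩ := exists_twist y q
    (η := |dotp (p - c) (p - c) - dotp (y - c) (y - c)|) (abs_pos.2 (hne ▸ hq))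
  have h₂p : h₂ p = p := h₂fix p le_rfl
  refine ⟨(h₂ * (h₁ * f * h₁⁻¹) * h₂⁻¹ : Equiv.Perm (E n)),
    mem_sigmaBar_of_zero hn N fun ε hε => hh₂.conj (hh₁.conj (h ε hε)), ?_⟩
  have e1 : h₂⁻¹ p = p := Equiv.Perm.inv_eq_iff_eq.2 h₂p.symm
  have e2 : h₁⁻¹ p = x₀ := Equiv.Perm.inv_eq_iff_eq.2 h₁x.symm
  simp only [Equiv.Perm.mul_apply, e1, e2, ← hy, h₂y]
  exact hqN

/-- Each ball contains the supports of two non-commuting twists. -/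
lemma exists_noncommuting {n : ℕ} (hn : 1 ≤ n) (p : E n) {δ : ℝ} (hδ : 0 < δ) :
    ∃ f g : Equiv.Perm (E n), NiceHam n f ∧ NiceHam n g ∧
      (∀ x, x ∉ Metric.ball p δ → f x = x) ∧ (∀ x, x ∉ Metric.ball p δ → g x = x) ∧
      ∃ x, (g * f * g⁻¹ * f⁻¹ : Equiv.Perm (E n)) x ≠ x := by
  obtain ⟨b, hb, hbd⟩ := exists_near hn p hδ
  obtain ⟨f, hf, hfp, hfS⟩ := exists_local_twist hδ hbd
  have hδ' : 0 < min δ (dist b p) := lt_min hδ (dist_pos.2 hb)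
  obtain ⟨p', hp', hpd'⟩ := exists_near hn p hδ'
  obtain ⟨g, hg, hgp, hgS⟩ := exists_local_twist hδ' hpd'
  refine ⟨f, g, hf, hg, hfS, fun x hx => hgS x fun h =>
    hx (Metric.ball_subset_ball (min_le_left _ _) h), f (g p), ?_⟩
  have hgb : g b = b := hgS b (by simp)
  have h1 : f⁻¹ (f (g p)) = g p := f.symm_apply_apply _
  have h2 : g⁻¹ (g p) = p := g.symm_apply_apply _
  rw [Equiv.Perm.mul_apply, Equiv.Perm.mul_apply, Equiv.Perm.mul_apply, h1, h2, hfp, hgb, ← hfp,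
    hgp]
  exact fun h => hp' (f.injective h).symm

lemma exists_displacing {n : ℕ} {U N : Set (E n)} (h : dispE n Set.univ U N = 0) :
    ∀ ε > 0, ∃ φ : Equiv.Perm (E n), HamLt n φ ε ∧ ∀ x ∈ U, φ x ∉ N := by
  intro ε hε
  have hlt : dispE n Set.univ U N < ENNReal.ofReal ε := by rw [h]; simpa using hε
  obtain ⟨_, ⟨φ, hφ, hd, rfl⟩, hc⟩ := sInf_lt_iff.1 hlt
  rw [ENNReal.ofReal_lt_ofReal_iff hε] at hc
  obtain ⟨f, rfl⟩ := exists_perm_of_ham hφ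
  refine ⟨f, hamLt_of_hoferNorm_lt hφ hc, fun x hx hxN => ?_⟩
  have : f x ∈ f '' (closure U ∩ Set.univ) ∩ N := ⟨⟨x, ⟨subset_closure hx, trivial⟩, rfl⟩, hxN⟩
  rw [hd] at this
  exact this

lemma exists_sigmaBar_of_not_rigid {n : ℕ} (hn : 1 ≤ n) {N : Set (E n)} (hN : IsClosed N) {p : E n}
    (h : ¬ RigidWrt n Set.univ N p) : ∃ φ ∈ SigmaBar n N, φ p ∉ N := by
  unfold RigidWrt at h
  push Not at h
  obtain ⟨U, hU, hpU, -, h0⟩ := h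
  have hdisp := exists_displacing (le_antisymm h0 bot_le)
  by_cases hNp : N ∈ 𝓝 p
  · obtain ⟨δ, hδ, hball⟩ := Metric.mem_nhds_iff.1 (Filter.inter_mem (hU.mem_nhds hpU) hNp)
    obtain ⟨f, g, hf, hg, hfS, hgS, x, hx⟩ := exists_noncommuting hn p hδ
    obtain ⟨φ₀, -, hφ₀⟩ := hdisp 1 one_pos
    refine exists_sigmaBar_of_zero hn hN (hφ₀ p hpU) (fun ε hε => ?_) hx
    obtain ⟨φ, hφ, hd⟩ := hdisp (ε / 4) (by positivity)
    have := commutator_hamLt hn hf hg hfS hgS hφ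
      fun x hx hx' => hd x (hball hx).1 (hball hx').2
    rwa [mul_div_cancel₀ ε (by norm_num : (4:ℝ) ≠ 0)] at this
  · obtain ⟨δ, hδ, hball⟩ := Metric.mem_nhds_iff.1 (hU.mem_nhds hpU)
    obtain ⟨q, hq, hqN⟩ : ∃ q, dotp (q - p) (q - p) < δ ^ 2 / 4 ∧ q ∉ N := by
      by_contra! hc
      have ho : IsOpen {q : E n | dotp (q - p) (q - p) < δ ^ 2 / 4} := by
        refine isOpen_lt ?_ continuous_const
        unfold dotp; simp only [Prod.fst_sub, Prod.snd_sub, Pi.sub_apply]; fun_prop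
      have hm : p ∈ {q : E n | dotp (q - p) (q - p) < δ ^ 2 / 4} := by
        change dotp (p - p) (p - p) < δ ^ 2 / 4
        rw [sub_self]
        simp only [dotp, Prod.fst_zero, Prod.snd_zero, Pi.zero_apply, mul_zero, add_zero,
          Finset.sum_const_zero]
        positivity
      exact hNp (Filter.mem_of_superset (ho.mem_nhds hm) hc)
    obtain ⟨f, hf, hfp, hfS⟩ := exists_local_twist hδ hq
    exact ⟨f, mem_sigmaBar_of_supported hn hdisp hf fun x hx => hfS x fun h => hx (hball h),
      hfp ▸ hqN⟩

/-! ### The rigid locus -/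

/-- `Σ̄_N` preserves the rigid points: if `φ ∈ Σ̄_N` moved `p` off `N`, then it would move a whole
neighbourhood off `N`, and so would the maps `ψ⁻¹ φ` of arbitrarily small energy. -/
lemma mem_of_rigid {n : ℕ} (hn : 1 ≤ n) {N : Set (E n)} (hN : IsClosed N) {p : E n}
    (h : RigidWrt n Set.univ N p) {φ : E n → E n} (hφ : φ ∈ SigmaBar n N) : φ p ∈ N := by
  by_contra hp
  obtain ⟨hφH, hφε⟩ := hφ
  have hcont : Continuous φ := by
    obtain ⟨H, Φ, h1, h2, rfl⟩ := hφH
    exact flow_continuous h1 h2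
  obtain ⟨δ, hδ, hball⟩ := Metric.mem_nhds_iff.1
    ((hN.isOpen_compl.preimage hcont).mem_nhds (show p ∈ φ ⁻¹' Nᶜ from hp))
  have hpos := h (Metric.ball p (δ / 2)) Metric.isOpen_ball (Metric.mem_ball_self (by positivity))
    (Set.subset_univ _)
  refine hpos.ne' (le_antisymm (ENNReal.le_of_forall_pos_le_add fun ε hε _ => ?_) bot_le)
  obtain ⟨ψ, ⟨hψH, hψN⟩, χ, hl, hr, hlt⟩ := hφε ε hε
  obtain ⟨a, ha⟩ := exists_hamLt hψH
  obtain ⟨b, hb⟩ := exists_hamLt hφH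
  rw [zero_add]
  have hle : ENNReal.ofReal (hoferNorm n Set.univ (χ ∘ φ)) ≤ ε := by
    rw [← ENNReal.ofReal_coe_nnreal]
    exact ENNReal.ofReal_le_ofReal hlt.le
  refine le_trans (sInf_le ⟨χ ∘ φ, ((ha.inv hr).comp hn hb).mem, ?_, rfl⟩) hle
  rw [Set.eq_empty_iff_forall_notMem]
  rintro _ ⟨⟨x, ⟨hx, -⟩, rfl⟩, hxN⟩
  have hx' : x ∈ Metric.ball p δ :=
    Metric.closedBall_subset_ball (by linarith) (Metric.closure_ball_subset_closedBall hx)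
  refine hball hx' ?_
  have : ψ (χ (φ x)) ∈ ψ '' N := ⟨_, hxN, rfl⟩
  rwa [hψN, hr] at this

/-- the rigid locus is the set of rigid points. -/
theorem rigidLocus_eq_rigid_points
    (n : ℕ) (hn : 1 ≤ n) (N : Set (E n)) (hN : IsClosed N) :
    rigidLocus n N = {p : E n | p ∈ N ∧ RigidWrt n Set.univ N p} := by
  ext p
  simp only [rigidLocus, Set.mem_iInter, Set.mem_preimage, Set.mem_ofPred_eq]
  constructor
  · intro h
    refine ⟨h _ (mem_sigmaBar_of_zero hn N (f := 1) fun ε hε => hamLt_one hε), ?_⟩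
    by_contra hr
    obtain ⟨φ, hφ, hp⟩ := exists_sigmaBar_of_not_rigid hn hN hr
    exact hp (h φ hφ)
  · rintro ⟨-, hr⟩ φ hφ
    exact mem_of_rigid hn hN hr hφ
end
end
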